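/- Let η ≥ 1 be an integer, let q ≥ 3 and let χ be a nonprincipal real Dirichlet character modulo q (so χ takes values in {−1, 0, 1}). For n ≥ 1 set r*(n) = ∑_{d | n} χ(d), let ω(n) denote the number of distinct prime factors of n, let μ denote the Möbius function, and for an integer N ≥ 1 set L_N = log(ω(N) + 3). Let L(1,χ) = ∑_{n≥1} χ(n)/n, let Γ denote the Gamma function, and define P(1) = ∏_{p | N} [(1 − 1/p)(1 − χ(p)/p)]^η · ∏_{p ∤ N} [(1 − 1/p)^η · (1 − χ(p)/p)^η · (1 + η(1 + χ(p))/p)], the products running over primes. Then there exist constants C, C' > 0, depending only on η and χ, such that for every integer N ≥ 1 and every real X ≥ exp(C·L_N^{2eη+2}): |∑_{n ≤ X, gcd(n,N)=1} μ(n)²·η^{ω(n)}·r*(n) − (P(1)·L(1,χ)^η/Γ(η))·X·(log X)^{η−1}| ≤ C'·(P(1)·L(1,χ)^η/Γ(η))·X·(log X)^{η−1}·L_N^{2eη+2}·(log X)^{−1/2}, where e is Euler's number. -/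

import Mathlib

open Finset

/-- The Euler product `P(1)` attached to a real-valued Dirichlet character `χ` mod `q`,
a positive integer `η` and a level `N`:
`P(1) = ∏_{p ∣ N} [(1 − 1/p)(1 − χ(p)/p)]^η ·
  ∏_{p ∤ N} (1 − 1/p)^η (1 − χ(p)/p)^η (1 + η(1 + χ(p))/p)`,
the products running over primes. -/
noncomputable def eulerProductP1 (q : ℕ) (χ : DirichletCharacter ℝ q) (η N : ℕ) : ℝ :=
  ∏' p : Nat.Primes,
    (if (p : ℕ) ∣ N then
      ((1 - 1 / ((p : ℕ) : ℝ)) * (1 - χ ((p : ℕ) : ZMod q) / ((p : ℕ) : ℝ))) ^ η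
    else
      (1 - 1 / ((p : ℕ) : ℝ)) ^ η * (1 - χ ((p : ℕ) : ZMod q) / ((p : ℕ) : ℝ)) ^ η *
        (1 + (η : ℝ) * (1 + χ ((p : ℕ) : ZMod q)) / ((p : ℕ) : ℝ)))


namespace MV

/-- Summatory function of an arithmetic function. -/
noncomputable def sm (a : ArithmeticFunction ℝ) (y : ℝ) : ℝ := ∑ n ∈ Ioc 0 ⌊y⌋₊, a n

lemma sm_mul (a b : ArithmeticFunction ℝ) (y : ℝ) :
    sm (a * b) y = ∑ n ∈ Ioc 0 ⌊y⌋₊, a n * sm b (y / n) := by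
  unfold sm
  rw [ArithmeticFunction.sum_Ioc_mul_eq_sum_sum]
  refine sum_congr rfl fun n hn => ?_
  rw [Nat.floor_div_natCast]

/-- The character as an arithmetic function. -/
noncomputable def chiA {q : ℕ} (χ : DirichletCharacter ℝ q) : ArithmeticFunction ℝ :=
  ⟨fun n => if n = 0 then 0 else χ (n : ZMod q), by simp⟩

lemma chiA_apply {q : ℕ} (χ : DirichletCharacter ℝ q) {n : ℕ} (hn : n ≠ 0) :
    chiA χ n = χ (n : ZMod q) := by
  simp [chiA, hn]

/-- The function `r*`. -/
noncomputable def rA {q : ℕ} (χ : DirichletCharacter ℝ q) : ArithmeticFunction ℝ :=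
  chiA χ * (ArithmeticFunction.zeta : ArithmeticFunction ℝ)

lemma rA_apply {q : ℕ} (χ : DirichletCharacter ℝ q) (n : ℕ) :
    rA χ n = ∑ d ∈ n.divisors, χ (d : ZMod q) := by
  unfold rA
  rw [ArithmeticFunction.coe_mul_zeta_apply]
  refine sum_congr rfl fun d hd => chiA_apply χ (Nat.pos_of_mem_divisors hd).ne'

lemma abel_bound (a w : ℕ → ℝ) (B : ℝ) (m : ℕ)
    (hB : ∀ M, |∑ i ∈ Ioc m M, a i| ≤ B)
    (hw : ∀ i, m < i → w (i + 1) ≤ w i) (hw0 : ∀ i, m < i → 0 ≤ w i) (M : ℕ) :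
    |∑ i ∈ Ioc m M, a i * w i| ≤ B * w (m + 1) := by
  have hB0 : 0 ≤ B := (abs_nonneg _).trans (hB 0)
  rcases Nat.lt_or_ge m M with h | h
  · have key : |∑ i ∈ Ioc m M, a i * w i - (∑ i ∈ Ioc m M, a i) * w M|
        ≤ B * (w (m + 1) - w M) := by
      induction M, h using Nat.le_induction with
      | base => simp
      | succ M hM ih =>
        have hmM : m ≤ M := by omega
        rw [← Finset.insert_Ioc_right_eq_Ioc_add_one hmM, sum_insert (by simp), sum_insert (by simp)]
        have h1 : a (M+1) * w (M+1) + ∑ i ∈ Ioc m M, a i * w i -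
            (a (M+1) + ∑ i ∈ Ioc m M, a i) * w (M+1) =
            (∑ i ∈ Ioc m M, a i * w i - (∑ i ∈ Ioc m M, a i) * w M) +
            (∑ i ∈ Ioc m M, a i) * (w M - w (M+1)) := by ring
        rw [h1]
        have h2 := hw M (by omega)
        refine (abs_add_le _ _).trans ?_
        rw [abs_mul, abs_of_nonneg (sub_nonneg.2 h2)]
        have := mul_le_mul_of_nonneg_right (hB M) (sub_nonneg.2 h2)
        linarith
    have h3 : |(∑ i ∈ Ioc m M, a i) * w M| ≤ B * w M := by
      rw [abs_mul, abs_of_nonneg (hw0 M h)]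
      exact mul_le_mul_of_nonneg_right (hB M) (hw0 M h)
    have h4 := abs_add_le (∑ i ∈ Ioc m M, a i * w i - (∑ i ∈ Ioc m M, a i) * w M)
      ((∑ i ∈ Ioc m M, a i) * w M)
    rw [sub_add_cancel] at h4
    linarith
  · rw [Finset.Ioc_eq_empty (by omega)]
    simpa using mul_nonneg hB0 (hw0 _ (by omega))

variable {q : ℕ} (χ : DirichletCharacter ℝ q)

lemma sum_range_q (hq : 3 ≤ q) (hχ : χ ≠ 1) : ∑ i ∈ range q, χ (i : ZMod q) = 0 := by
  have : NeZero q := ⟨by omega⟩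
  rw [← MulChar.sum_eq_zero_of_ne_one hχ]
  refine Finset.sum_bij' (fun i _ => (i : ZMod q)) (fun x _ => x.val) ?_ ?_ ?_ ?_ ?_
  · simp
  · intro x _; simpa using ZMod.val_lt x
  · intro i hi; simpa using ZMod.val_cast_of_lt (mem_range.1 hi)
  · intro x _; simp
  · simp

lemma abs_chi_le (hχval : ∀ n : ℕ, χ (n : ZMod q) ∈ ({-1, 0, 1} : Set ℝ)) (n : ℕ) :
    |χ (n : ZMod q)| ≤ 1 := by
  have := hχval n
  simp only [Set.mem_insert_iff, Set.mem_singleton_iff] at this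
  rcases this with h | h | h <;> rw [h] <;> simp

lemma abs_sum_range_le (hq : 3 ≤ q) (hχ : χ ≠ 1)
    (hχval : ∀ n : ℕ, χ (n : ZMod q) ∈ ({-1, 0, 1} : Set ℝ)) (n : ℕ) :
    |∑ i ∈ range n, χ (i : ZMod q)| ≤ q := by
  induction n using Nat.strong_induction_on with
  | _ n ih =>
    rcases Nat.lt_or_ge n q with h | h
    · refine (abs_sum_le_sum_abs _ _).trans ?_
      refine (sum_le_sum fun i _ => abs_chi_le χ hχval i).trans ?_
      simpa using h.le
    · obtain ⟨k, rfl⟩ := Nat.exists_eq_add_of_le h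
      rw [sum_range_add, sum_range_q χ hq hχ, zero_add]
      have : ∀ i, χ ((q + i : ℕ) : ZMod q) = χ (i : ZMod q) := by intro i; simp
      simp only [this]
      exact ih k (by omega)

lemma abs_sum_Ioc_le (hq : 3 ≤ q) (hχ : χ ≠ 1)
    (hχval : ∀ n : ℕ, χ (n : ZMod q) ∈ ({-1, 0, 1} : Set ℝ)) (m n : ℕ) :
    |∑ i ∈ Ioc m n, χ (i : ZMod q)| ≤ 2 * q := by
  rcases Nat.lt_or_ge n m with h | h
  · rw [Finset.Ioc_eq_empty (by omega)]; simp
  · have h1 : ∑ i ∈ Ioc m n, χ (i : ZMod q) =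
        ∑ i ∈ range (n+1), χ (i : ZMod q) - ∑ i ∈ range (m+1), χ (i : ZMod q) := by
      rw [← Finset.sum_Ico_eq_sub _ (by omega)]
      refine sum_congr ?_ fun _ _ => rfl
      ext i
      simp only [mem_Ioc, mem_Ico]
      omega
    rw [h1]
    have := abs_sum_range_le χ hq hχ hχval (n+1)
    have := abs_sum_range_le χ hq hχ hχval (m+1)
    refine (abs_sub _ _).trans ?_
    linarith

lemma L1_tail (hq : 3 ≤ q) (hχ : χ ≠ 1)
    (hχval : ∀ n : ℕ, χ (n : ZMod q) ∈ ({-1, 0, 1} : Set ℝ))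
    (L1 : ℝ)
    (hL1 : Filter.Tendsto (fun M : ℕ => ∑ n ∈ Finset.Icc 1 M, χ (n : ZMod q) / (n : ℝ))
      Filter.atTop (nhds L1)) (m : ℕ) :
    |L1 - ∑ n ∈ Ioc 0 m, χ (n : ZMod q) / (n : ℝ)| ≤ 2 * q / (m + 1) := by
  have h1 : Filter.Tendsto (fun M : ℕ => |∑ n ∈ Finset.Icc 1 M, χ (n : ZMod q) / (n : ℝ)
      - ∑ n ∈ Ioc 0 m, χ (n : ZMod q) / (n : ℝ)|) Filter.atTop
      (nhds |L1 - ∑ n ∈ Ioc 0 m, χ (n : ZMod q) / (n : ℝ)|) :=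
    (hL1.sub_const _).abs
  refine le_of_tendsto h1 ?_
  filter_upwards [Filter.eventually_ge_atTop m] with M hM
  have h2 : ∑ n ∈ Finset.Icc 1 M, χ (n : ZMod q) / (n : ℝ)
      - ∑ n ∈ Ioc 0 m, χ (n : ZMod q) / (n : ℝ) = ∑ n ∈ Ioc m M, χ (n : ZMod q) * (1 / (n:ℝ)) := by
    have : Finset.Icc 1 M = Ioc 0 M := rfl
    rw [this, ← Finset.sum_Ioc_consecutive _ (Nat.zero_le m) hM]
    simp [div_eq_mul_inv]
  rw [h2]
  have := abel_bound (fun n => χ (n : ZMod q)) (fun n => 1 / (n:ℝ)) (2*q) m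
    (fun M => abs_sum_Ioc_le χ hq hχ hχval m M) ?_ ?_ M
  · refine this.trans (le_of_eq ?_)
    push_cast; ring
  · intro i hi
    have : (0:ℝ) < i := by exact_mod_cast (by omega : 0 < i)
    apply one_div_le_one_div_of_le this; push_cast; linarith
  · intro i hi; positivity

/-- `∑_{n ≤ y} r*(n) = L(1,χ) y + O(√y)`. -/
lemma sm_rA (hq : 3 ≤ q) (hχ : χ ≠ 1)
    (hχval : ∀ n : ℕ, χ (n : ZMod q) ∈ ({-1, 0, 1} : Set ℝ))
    (L1 : ℝ)
    (hL1 : Filter.Tendsto (fun M : ℕ => ∑ n ∈ Finset.Icc 1 M, χ (n : ZMod q) / (n : ℝ))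
      Filter.atTop (nhds L1)) :
    ∃ B : ℝ, 0 < B ∧ ∀ y : ℝ, 1 ≤ y → |sm (rA χ) y - L1 * y| ≤ B * √y := by
  refine ⟨4 * q + 1, by positivity, fun y hy => ?_⟩
  have hy0 : 0 < y := by linarith
  set z := ⌊√y⌋₊ with hz
  have hs0 : 0 < √y := Real.sqrt_pos.2 hy0
  have hss : √y * √y = y := Real.mul_self_sqrt hy0.le
  have hz1 : (z:ℝ) ≤ √y := Nat.floor_le hs0.le
  have hz2 : √y < z + 1 := Nat.lt_floor_add_one _
  have hsy : √y ≤ y := by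
    have : 1 ≤ √y := Real.one_le_sqrt.2 hy
    nlinarith
  have hzy : z ≤ ⌊y⌋₊ := Nat.floor_le_floor hsy
  have h1 : sm (rA χ) y = ∑ n ∈ Ioc 0 ⌊y⌋₊, χ (n : ZMod q) * ((⌊y⌋₊ / n : ℕ) : ℝ) := by
    unfold sm rA
    rw [ArithmeticFunction.sum_Ioc_mul_zeta_eq_sum]
    refine sum_congr rfl fun n hn => ?_
    rw [chiA_apply _ (by have := (mem_Ioc.1 hn).1; omega)]
  rw [h1, ← Finset.sum_Ioc_consecutive _ (Nat.zero_le z) hzy]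
  have hdiv : ∀ n : ℕ, ((⌊y⌋₊ / n : ℕ) : ℝ) ≤ y / n := by
    intro n
    rw [← Nat.floor_div_natCast]
    exact Nat.floor_le (by positivity)
  have h2 : |∑ n ∈ Ioc z ⌊y⌋₊, χ (n : ZMod q) * ((⌊y⌋₊ / n : ℕ) : ℝ)| ≤ 2 * q * √y := by
    have := abel_bound (fun n => χ (n : ZMod q)) (fun n => ((⌊y⌋₊ / n : ℕ) : ℝ)) (2*q) z
      (fun M => abs_sum_Ioc_le χ hq hχ hχval z M) ?_ ?_ ⌊y⌋₊
    · refine this.trans ?_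
      gcongr
      refine (hdiv _).trans ?_
      rw [div_le_iff₀ (by positivity)]
      push_cast
      nlinarith
    · intro i hi
      exact_mod_cast Nat.div_le_div_left (by omega) (by omega)
    · intro i hi; positivity
  have h3 : |∑ n ∈ Ioc 0 z, χ (n : ZMod q) * ((⌊y⌋₊ / n : ℕ) : ℝ)
      - y * ∑ n ∈ Ioc 0 z, χ (n : ZMod q) / (n : ℝ)| ≤ √y := by
    rw [mul_sum, ← sum_sub_distrib]
    refine (abs_sum_le_sum_abs _ _).trans ?_
    refine (sum_le_sum (g := fun _ => (1:ℝ)) fun n hn => ?_).trans ?_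
    · have e : χ (n : ZMod q) * ((⌊y⌋₊ / n : ℕ) : ℝ) - y * (χ (n : ZMod q) / (n : ℝ)) =
        - (χ (n : ZMod q) * (y / n - ((⌊y⌋₊ / n : ℕ) : ℝ))) := by ring
      rw [e, abs_neg, abs_mul, abs_of_nonneg (sub_nonneg.2 (hdiv n))]
      have h5 := abs_chi_le χ hχval n
      have h6 : y / n - ((⌊y⌋₊ / n : ℕ) : ℝ) ≤ 1 := by
        rw [← Nat.floor_div_natCast]
        linarith [Nat.lt_floor_add_one (y / (n:ℝ))]
      exact mul_le_one₀ h5 (sub_nonneg.2 (hdiv n)) h6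
    · simpa using hz1
  have h4 := L1_tail χ hq hχ hχval L1 hL1 z
  have h5 : |y * ∑ n ∈ Ioc 0 z, χ (n : ZMod q) / (n : ℝ) - L1 * y| ≤ 2 * q * √y := by
    have : y * ∑ n ∈ Ioc 0 z, χ (n : ZMod q) / (n : ℝ) - L1 * y =
      - (y * (L1 - ∑ n ∈ Ioc 0 z, χ (n : ZMod q) / (n : ℝ))) := by ring
    rw [this, abs_neg, abs_mul, abs_of_pos hy0]
    calc y * |L1 - ∑ n ∈ Ioc 0 z, χ (n : ZMod q) / (n : ℝ)| ≤ y * (2 * q / (z + 1)) := by gcongr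
      _ = 2 * q * (y / (z+1)) := by ring
      _ ≤ 2 * q * √y := by
        gcongr
        rw [div_le_iff₀ (by positivity)]
        nlinarith
  rw [abs_le] at *
  constructor <;> linarith [h2.1, h2.2, h3.1, h3.2, h5.1, h5.2]

end MV


namespace MV
variable {q : ℕ} (χ : DirichletCharacter ℝ q)

lemma chiA_mult : (chiA χ).IsMultiplicative := by
  rw [ArithmeticFunction.IsMultiplicative.iff_ne_zero]
  refine ⟨by simp [chiA], fun {m n} hm hn _ => ?_⟩
  rw [chiA_apply _ hm, chiA_apply _ hn, chiA_apply _ (mul_ne_zero hm hn)]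
  simp

lemma rA_mult : (rA χ).IsMultiplicative :=
  (chiA_mult χ).mul ArithmeticFunction.isMultiplicative_zeta.natCast

lemma rA_nonneg (hχval : ∀ n : ℕ, χ (n : ZMod q) ∈ ({-1, 0, 1} : Set ℝ)) (n : ℕ) :
    0 ≤ rA χ n := by
  rcases eq_or_ne n 0 with rfl | hn
  · simp
  rw [(rA_mult χ).multiplicative_factorization _ hn]
  refine prod_nonneg fun p hp => ?_
  have hp' : p.Prime := Nat.prime_of_mem_primeFactors (by simpa using hp)
  show 0 ≤ rA χ (p ^ (n.factorization p))
  rw [rA_apply, Nat.sum_divisors_prime_pow hp']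
  simp only [Nat.cast_pow, map_pow]
  have := hχval p
  simp only [Set.mem_insert_iff, Set.mem_singleton_iff] at this
  rcases this with h | h | h
  · rw [h, neg_one_geom_sum]; split_ifs <;> simp
  · rw [h]; exact sum_nonneg fun i _ => by positivity
  · rw [h]; simp; positivity

lemma rpow_nonneg' (hχval : ∀ n : ℕ, χ (n : ZMod q) ∈ ({-1, 0, 1} : Set ℝ)) (k n : ℕ) :
    0 ≤ (rA χ ^ k) n := by
  induction k generalizing n with
  | zero => rw [pow_zero, ArithmeticFunction.one_apply]; split_ifs <;> simp
  | succ k ih =>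
    rw [pow_succ, ArithmeticFunction.mul_apply]
    exact sum_nonneg fun x _ => mul_nonneg (ih _) (rA_nonneg χ hχval _)

lemma tendsto_rA (hq : 3 ≤ q) (hχ : χ ≠ 1)
    (hχval : ∀ n : ℕ, χ (n : ZMod q) ∈ ({-1, 0, 1} : Set ℝ))
    (L1 : ℝ)
    (hL1 : Filter.Tendsto (fun M : ℕ => ∑ n ∈ Finset.Icc 1 M, χ (n : ZMod q) / (n : ℝ))
      Filter.atTop (nhds L1)) :
    Filter.Tendsto (fun n : ℕ => (∑ k ∈ Icc 1 n, rA χ k) / (n : ℝ)) Filter.atTop (nhds L1) := by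
  obtain ⟨B, hB, h⟩ := sm_rA χ hq hχ hχval L1 hL1
  rw [tendsto_iff_norm_sub_tendsto_zero]
  have hlim : Filter.Tendsto (fun n : ℕ => B / √(n:ℝ)) Filter.atTop (nhds 0) :=
    Filter.Tendsto.const_div_atTop
      (Real.tendsto_sqrt_atTop.comp tendsto_natCast_atTop_atTop) B
  refine squeeze_zero' (Filter.Eventually.of_forall fun _ => norm_nonneg _) ?_ hlim
  filter_upwards [Filter.eventually_ge_atTop 1] with n hn
  have hn1 : (1:ℝ) ≤ n := by exact_mod_cast hn
  have hn0 : (0:ℝ) < n := by linarith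
  have h1 := h n hn1
  unfold sm at h1
  rw [Nat.floor_natCast] at h1
  have e : Icc 1 n = Ioc 0 n := rfl
  rw [e, Real.norm_eq_abs]
  have h2 : (∑ k ∈ Ioc 0 n, rA χ k) / (n : ℝ) - L1 =
    ((∑ k ∈ Ioc 0 n, rA χ k) - L1 * n) / n := by field_simp
  rw [h2, abs_div, abs_of_pos hn0, div_le_iff₀ hn0]
  refine h1.trans (le_of_eq ?_)
  have hs : 0 < √(n:ℝ) := Real.sqrt_pos.2 hn0
  rw [div_mul_eq_mul_div, eq_div_iff hs.ne', mul_assoc, Real.mul_self_sqrt hn0.le]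

lemma L1_pos (hq : 3 ≤ q) (hχ : χ ≠ 1)
    (hχval : ∀ n : ℕ, χ (n : ZMod q) ∈ ({-1, 0, 1} : Set ℝ))
    (L1 : ℝ)
    (hL1 : Filter.Tendsto (fun M : ℕ => ∑ n ∈ Finset.Icc 1 M, χ (n : ZMod q) / (n : ℝ))
      Filter.atTop (nhds L1)) : 0 < L1 := by
  have : NeZero q := ⟨by omega⟩
  have hT := tendsto_rA χ hq hχ hχval L1 hL1
  have h0 : 0 ≤ L1 := ge_of_tendsto' hT fun n =>
    div_nonneg (sum_nonneg fun i _ => rA_nonneg χ hχval i) (Nat.cast_nonneg _)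
  have hS := LSeries_tendsto_sub_mul_nhds_one_of_tendsto_sum_div_and_nonneg
    (fun n => rA χ n) hT (rA_nonneg χ hχval)
  let ψ : DirichletCharacter ℂ q := MulChar.ringHomComp χ Complex.ofRealHom
  have hψ : ψ ≠ 1 := (MulChar.ringHomComp_ne_one_iff Complex.ofReal_injective).2 hχ
  have hψa : ∀ n : ℕ, ψ (n : ZMod q) = ((χ (n : ZMod q) : ℝ) : ℂ) := fun n => rfl
  have hconv : (fun n => ((rA χ n : ℝ) : ℂ)) =
      LSeries.convolution (fun n => ψ (n : ZMod q)) (1 : ℕ → ℂ) := by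
    ext n
    rw [LSeries.convolution_def, rA_apply]
    simp only [Pi.one_apply, mul_one, hψa]
    rw [Nat.sum_divisorsAntidiagonal (f := fun d _ => ((χ (d : ZMod q) : ℝ) : ℂ))]
    push_cast; try rfl
  have hval : ∀ s : ℝ, 1 < s → LSeries (fun n => ((rA χ n : ℝ) : ℂ)) s =
      ψ.LFunction s * riemannZeta s := by
    intro s hs
    have hs' : 1 < (s:ℂ).re := by simpa using hs
    rw [hconv, LSeries_convolution' (DirichletCharacter.LSeriesSummable_of_one_lt_re ψ hs')
      (LSeriesSummable_one_iff.2 hs'), DirichletCharacter.LFunction_eq_LSeries ψ hs',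
      LSeries_one_eq_riemannZeta hs']
  have hcast : Filter.Tendsto (fun s : ℝ => (s:ℂ)) (nhdsWithin 1 (Set.Ioi 1))
      (nhdsWithin 1 {1}ᶜ) := by
    refine tendsto_nhdsWithin_iff.2 ⟨?_, ?_⟩
    · exact (Complex.continuous_ofReal.tendsto' 1 1 (by simp)).mono_left nhdsWithin_le_nhds
    · filter_upwards [self_mem_nhdsWithin] with s hs
      have hs : 1 < s := hs
      simp only [Set.mem_compl_iff, Set.mem_singleton_iff]
      exact_mod_cast hs.ne'
  have hz := riemannZeta_residue_one.comp hcast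
  have hLc : Filter.Tendsto (fun s : ℝ => ψ.LFunction (s:ℂ)) (nhdsWithin 1 (Set.Ioi 1))
      (nhds (ψ.LFunction 1)) :=
    ((DirichletCharacter.differentiable_LFunction hψ).continuous.tendsto 1).comp
      (hcast.mono_right nhdsWithin_le_nhds)
  have hprod := hLc.mul hz
  have heq := tendsto_nhds_unique (hS.congr' ?_) hprod
  · rw [mul_one] at heq
    have hne := DirichletCharacter.LFunction_apply_one_ne_zero hψ
    rcases h0.lt_or_eq with h | h
    · exact h
    · rw [← h] at heq
      exact absurd heq.symm (by simpa using hne)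
  · filter_upwards [self_mem_nhdsWithin] with s hs
    have hs : 1 < s := hs
    rw [hval s hs]
    simp only [Function.comp]
    ring

end MV


namespace MV

lemma sm_eq_Icc (a : ArithmeticFunction ℝ) (y : ℝ) : ∑ n ∈ Icc 0 ⌊y⌋₊, a n = sm a y := by
  unfold sm
  rw [Finset.Icc_eq_cons_Ioc (Nat.zero_le _), sum_cons, ArithmeticFunction.map_zero, zero_add]

lemma sum_div_sqrt_le (a : ArithmeticFunction ℝ) (K : ℝ) (M : ℕ)
    (hH : ∀ m : ℕ, 1 ≤ m → m ≤ M → ∑ n ∈ Ioc 0 m, a n ≤ K * m) (hK : 0 ≤ K) :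
    ∑ n ∈ Ioc 0 M, a n / √(n:ℝ) ≤ 2 * K * √(M:ℝ) := by
  have key : ∀ m, m ≤ M → ∑ n ∈ Ioc 0 m, a n / √(n:ℝ) - (∑ n ∈ Ioc 0 m, a n) / √(m:ℝ)
      ≤ K * √(m:ℝ) := by
    intro m
    induction m with
    | zero => simp
    | succ m ih =>
      intro hm
      have ih := ih (by omega)
      rw [← Finset.insert_Ioc_right_eq_Ioc_add_one (Nat.zero_le m), sum_insert (by simp),
        sum_insert (by simp)]
      have hv : 0 < √((m+1 : ℕ):ℝ) := Real.sqrt_pos.2 (by positivity)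
      have huv : √(m:ℝ) ≤ √((m+1 : ℕ):ℝ) := Real.sqrt_le_sqrt (by push_cast; linarith)
      have e : a (m+1) / √((m+1 : ℕ):ℝ) + ∑ n ∈ Ioc 0 m, a n / √(n:ℝ) -
          (a (m+1) + ∑ n ∈ Ioc 0 m, a n) / √((m+1 : ℕ):ℝ) =
          ∑ n ∈ Ioc 0 m, a n / √(n:ℝ) - (∑ n ∈ Ioc 0 m, a n) / √((m+1 : ℕ):ℝ) := by ring
      rw [e]
      rcases Nat.eq_zero_or_pos m with rfl | hm0
      · simp; positivity
      have hu : 0 < √(m:ℝ) := Real.sqrt_pos.2 (by exact_mod_cast hm0)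
      set u := √(m:ℝ)
      set v := √((m+1 : ℕ):ℝ)
      have huu : u * u = m := Real.mul_self_sqrt (by positivity)
      have h1 := hH m hm0 (by omega)
      have h2 : (∑ n ∈ Ioc 0 m, a n) * (1 / u - 1 / v) ≤ K * m * (1 / u - 1 / v) :=
        mul_le_mul_of_nonneg_right h1 (sub_nonneg.2 (one_div_le_one_div_of_le hu huv))
      have h3 : K * m * (1 / u - 1 / v) ≤ K * (v - u) := by
        rw [← huu]
        have : K * (u * u) * (1 / u - 1 / v) = K * ((v - u) * (u / v)) := by
          field_simp
        rw [this]
        have h4 : u / v ≤ 1 := (div_le_one hv).2 huv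
        exact mul_le_mul_of_nonneg_left (mul_le_of_le_one_right (sub_nonneg.2 huv) h4) hK
      have e2 : ∑ n ∈ Ioc 0 m, a n / √(n:ℝ) - (∑ n ∈ Ioc 0 m, a n) / v =
        (∑ n ∈ Ioc 0 m, a n / √(n:ℝ) - (∑ n ∈ Ioc 0 m, a n) / u) +
          (∑ n ∈ Ioc 0 m, a n) * (1 / u - 1 / v) := by ring
      linarith
  have h1 := key M le_rfl
  rcases Nat.eq_zero_or_pos M with rfl | hM0
  · simp
  have hu : 0 < √(M:ℝ) := Real.sqrt_pos.2 (by exact_mod_cast hM0)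
  have h2 : (∑ n ∈ Ioc 0 M, a n) / √(M:ℝ) ≤ K * √(M:ℝ) := by
    rw [div_le_iff₀ hu, mul_assoc, Real.mul_self_sqrt (by positivity)]
    exact hH M hM0 le_rfl
  linarith

lemma log_facts {t : ℝ} (ht : 1 ≤ t) : 0 ≤ Real.log t ∧ 1 ≤ √(1 + Real.log t) ∧
    √(1 + Real.log t) * √(1 + Real.log t) = 1 + Real.log t := by
  have h := Real.log_nonneg ht
  exact ⟨h, Real.one_le_sqrt.2 (by linarith), Real.mul_self_sqrt (by linarith)⟩

lemma sum_div_asymp (a : ArithmeticFunction ℝ) (k : ℕ) (c B : ℝ) (hB : 0 < B)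
    (h : ∀ y : ℝ, 1 ≤ y → |sm a y - c * y * Real.log y ^ k| ≤
      B * y * (1 + Real.log y) ^ k / √(1 + Real.log y)) (y : ℝ) (hy : 1 ≤ y) :
    |∑ n ∈ Ioc 0 ⌊y⌋₊, a n / n - c / (k + 1) * Real.log y ^ (k + 1)| ≤
      (|c| + 3 * B) * (1 + Real.log y) ^ k * √(1 + Real.log y) := by
  have hy0 : 0 < y := by linarith
  have hne : ∀ t ∈ Set.Icc 1 y, t ≠ 0 := fun t ht => by have := ht.1; positivity
  have hInt : MeasureTheory.IntegrableOn (deriv fun t : ℝ => t⁻¹) (Set.Icc 1 y) := by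
    rw [deriv_inv']
    refine ContinuousOn.integrableOn_Icc ?_
    exact ContinuousOn.neg (ContinuousOn.inv₀ (by fun_prop) fun t ht => pow_ne_zero 2 (hne t ht))
  have habel := sum_mul_eq_sub_integral_mul₀ (f := fun t : ℝ => t⁻¹) (fun n => a n)
    (by simp) y (fun t ht => differentiableAt_inv (hne t ht)) hInt
  have hintH := integrableOn_mul_sum_Icc (fun n => a n) (m := 0) zero_le_one hInt
  rw [deriv_inv'] at habel hintH
  simp only [sm_eq_Icc] at habel hintH
  have hsum : ∑ n ∈ Icc 0 ⌊y⌋₊, (n:ℝ)⁻¹ * a n = ∑ n ∈ Ioc 0 ⌊y⌋₊, a n / n := by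
    rw [Finset.Icc_eq_cons_Ioc (Nat.zero_le _), sum_cons, ArithmeticFunction.map_zero, mul_zero,
      zero_add]
    exact sum_congr rfl fun n _ => by ring
  rw [hsum] at habel
  have hintH' := hintH.mono_set Set.Ioc_subset_Icc_self
  -- main integral
  have hI1 : ∫ t in Set.Ioc 1 y, c * Real.log t ^ k / t = c / (k+1) * Real.log y ^ (k+1) := by
    rw [← intervalIntegral.integral_of_le hy]
    rw [intervalIntegral.integral_eq_sub_of_hasDerivAt
      (f := fun t => c / (k+1) * Real.log t ^ (k+1))]
    · simp
    · intro t ht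
      rw [Set.uIcc_of_le hy] at ht
      have := ((Real.hasDerivAt_log (hne t ht)).pow (k+1)).const_mul (c / (k+1))
      refine HasDerivAt.congr_deriv this ?_
      push_cast
      have := hne t ht
      field_simp
    · refine ContinuousOn.intervalIntegrable ?_
      rw [Set.uIcc_of_le hy]
      exact (continuousOn_const.mul ((Real.continuousOn_log.mono
        (fun t ht => hne t ht)).pow k)).div continuousOn_id hne
  have hi1 : MeasureTheory.IntegrableOn (fun t => c * Real.log t ^ k / t) (Set.Ioc 1 y) := by
    refine (ContinuousOn.integrableOn_Icc ?_).mono_set Set.Ioc_subset_Icc_self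
    exact (continuousOn_const.mul ((Real.continuousOn_log.mono
        (fun t ht => hne t ht)).pow k)).div continuousOn_id hne
  obtain ⟨hl, hs1, hss⟩ := log_facts hy
  have hgc : ContinuousOn (fun t => B * (1 + Real.log y) ^ k * (t⁻¹ / √(1 + Real.log t)))
      (Set.Icc 1 y) := by
    refine continuousOn_const.mul (ContinuousOn.div (ContinuousOn.inv₀ continuousOn_id hne) ?_ ?_)
    · exact (continuousOn_const.add (Real.continuousOn_log.mono (fun t ht => hne t ht))).sqrt
    · intro t ht
      have := (log_facts ht.1).2.1
      positivity
  have hI2 : ∫ t in Set.Ioc 1 y, B * (1 + Real.log y) ^ k * (t⁻¹ / √(1 + Real.log t)) =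
      B * (1 + Real.log y) ^ k * (2 * √(1 + Real.log y)) - B * (1 + Real.log y) ^ k * 2 := by
    rw [← intervalIntegral.integral_of_le hy]
    rw [intervalIntegral.integral_eq_sub_of_hasDerivAt
      (f := fun t => B * (1 + Real.log y) ^ k * (2 * √(1 + Real.log t)))]
    · simp
    · intro t ht
      rw [Set.uIcc_of_le hy] at ht
      have hlt := log_facts ht.1
      have := ((((Real.hasDerivAt_log (hne t ht)).const_add 1).sqrt
        (by linarith [hlt.1])).const_mul 2).const_mul (B * (1 + Real.log y) ^ k)
      refine HasDerivAt.congr_deriv this ?_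
      have := hne t ht
      have := hlt.2.1
      field_simp
    · refine ContinuousOn.intervalIntegrable ?_
      rw [Set.uIcc_of_le hy]
      exact hgc
  have hi2 : MeasureTheory.IntegrableOn
      (fun t => B * (1 + Real.log y) ^ k * (t⁻¹ / √(1 + Real.log t))) (Set.Ioc 1 y) :=
    (hgc.integrableOn_Icc).mono_set Set.Ioc_subset_Icc_self
  have hdiff : |∫ t in Set.Ioc 1 y, (- (-(t^2)⁻¹ * sm a t) - c * Real.log t ^ k / t)| ≤
      B * (1 + Real.log y) ^ k * (2 * √(1 + Real.log y)) - B * (1 + Real.log y) ^ k * 2 := by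
    rw [← hI2, ← Real.norm_eq_abs]
    refine MeasureTheory.norm_integral_le_of_norm_le hi2 ?_
    refine (MeasureTheory.ae_restrict_mem measurableSet_Ioc).mono fun t ht => ?_
    have ht1 : 1 ≤ t := ht.1.le
    have ht0 : 0 < t := by linarith
    have hlt := log_facts ht1
    have hs0 : 0 < √(1 + Real.log t) := by linarith [hlt.2.1]
    have hE := h t ht1
    have e : - (-(t^2)⁻¹ * sm a t) - c * Real.log t ^ k / t =
      (sm a t - c * t * Real.log t ^ k) * (t^2)⁻¹ := by field_simp
    rw [e, Real.norm_eq_abs, abs_mul, abs_of_pos (a := (t^2)⁻¹) (by positivity)]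
    calc _ ≤ B * t * (1 + Real.log t) ^ k / √(1 + Real.log t) * (t^2)⁻¹ := by gcongr
      _ = B * (1 + Real.log t) ^ k * (t⁻¹ / √(1 + Real.log t)) := by field_simp
      _ ≤ _ := by
        have hlog : Real.log t ≤ Real.log y := Real.log_le_log ht0 ht.2
        have := hlt.1
        gcongr
  have hsplit : ∫ t in Set.Ioc 1 y, (- (-(t^2)⁻¹ * sm a t) - c * Real.log t ^ k / t) =
      -(∫ t in Set.Ioc 1 y, (-(t^2)⁻¹ * sm a t)) - c / (k+1) * Real.log y ^ (k+1) := by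
    rw [← hI1, ← MeasureTheory.integral_neg]
    exact MeasureTheory.integral_sub hintH'.neg hi1
  rw [hsplit] at hdiff
  rw [habel]
  have hHy := h y hy
  have hs0 : 0 < √(1 + Real.log y) := by linarith
  set s := √(1 + Real.log y) with hs
  set ℓ := Real.log y with hℓ
  have hpow : 0 < (1 + ℓ) ^ k := by positivity
  have hpow2 : ℓ ^ k ≤ (1 + ℓ)^k := pow_le_pow_left₀ hl (by linarith) k
  have h1 : |y⁻¹ * sm a y| ≤ (|c| + B) * (1 + ℓ)^k * s := by
    have h2 : |sm a y| ≤ |c| * y * ℓ^k + B * y * (1+ℓ)^k / s := by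
      have h3 : |c * y * ℓ^k| = |c| * y * ℓ^k := by
        rw [abs_mul, abs_mul, abs_of_pos hy0, abs_of_nonneg (pow_nonneg hl k)]
      have h4 := abs_add_le (sm a y - c * y * ℓ^k) (c * y * ℓ^k)
      rw [sub_add_cancel, h3] at h4
      linarith
    rw [abs_mul, abs_of_pos (inv_pos.2 hy0)]
    calc y⁻¹ * |sm a y| ≤ y⁻¹ * (|c| * y * ℓ^k + B * y * (1+ℓ)^k / s) := by gcongr
      _ = |c| * ℓ^k + B * (1+ℓ)^k / s := by field_simp
      _ ≤ |c| * ((1+ℓ)^k * s) + B * (1+ℓ)^k * s := by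
        have h5 : (1+ℓ)^k ≤ (1+ℓ)^k * s := le_mul_of_one_le_right hpow.le hs1
        have h6 : B * (1+ℓ)^k / s ≤ B * (1+ℓ)^k * s := by
          rw [div_le_iff₀ hs0]
          have : 1 ≤ s * s := by nlinarith
          have : 0 < B * (1+ℓ)^k := by positivity
          nlinarith
        have := mul_le_mul_of_nonneg_left (hpow2.trans h5) (abs_nonneg c)
        linarith
      _ = _ := by ring
  have h7 : 0 < B * (1+ℓ)^k := by positivity
  rw [abs_le] at *
  constructor <;> nlinarith [h1.1, h1.2, hdiff.1, hdiff.2]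

variable {q : ℕ} (χ : DirichletCharacter ℝ q)

theorem sm_pow_asymp (hq : 3 ≤ q) (hχ : χ ≠ 1)
    (hχval : ∀ n : ℕ, χ (n : ZMod q) ∈ ({-1, 0, 1} : Set ℝ))
    (L1 : ℝ)
    (hL1 : Filter.Tendsto (fun M : ℕ => ∑ n ∈ Finset.Icc 1 M, χ (n : ZMod q) / (n : ℝ))
      Filter.atTop (nhds L1)) (k : ℕ) :
    ∃ B : ℝ, 0 < B ∧ ∀ y : ℝ, 1 ≤ y →
      |sm (rA χ ^ (k+1)) y - (L1 ^ (k+1) / (k.factorial : ℝ)) * y * Real.log y ^ k| ≤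
        B * y * (1 + Real.log y) ^ k / √(1 + Real.log y) := by
  obtain ⟨B0, hB0, h0⟩ := sm_rA χ hq hχ hχval L1 hL1
  induction k with
  | zero =>
    refine ⟨B0, hB0, fun y hy => ?_⟩
    have hy0 : 0 < y := by linarith
    have h := h0 y hy
    obtain ⟨hl, hs1, hss⟩ := log_facts hy
    simp only [zero_add, pow_one, Nat.factorial_zero, Nat.cast_one, div_one, pow_zero, mul_one]
    refine h.trans ?_
    rw [le_div_iff₀ (by linarith), mul_assoc]
    gcongr
    calc √y * √(1 + Real.log y) ≤ √y * √y := by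
          gcongr
          linarith [Real.log_le_sub_one_of_pos hy0]
      _ = y := Real.mul_self_sqrt hy0.le
  | succ k ih =>
    obtain ⟨B, hB, h⟩ := ih
    set a := rA χ ^ (k+1) with ha
    set c := L1 ^ (k+1) / (k.factorial : ℝ) with hc
    have ha0 : ∀ n, 0 ≤ a n := fun n => rpow_nonneg' χ hχval _ n
    refine ⟨|L1| * (|c| + 3 * B) + 2 * B0 * (|c| + B), by positivity, fun y hy => ?_⟩
    have hy0 : 0 < y := by linarith
    obtain ⟨hl, hs1, hss⟩ := log_facts hy
    have h1 := sum_div_asymp a k c B hB h y hy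
    rw [pow_succ, ← ha, sm_mul]
    set s := √(1 + Real.log y) with hs
    set ℓ := Real.log y with hℓ
    have hs0 : 0 < s := by linarith
    have hpow : 0 < (1 + ℓ) ^ k := by positivity
    have hsum2 : ∑ n ∈ Ioc 0 ⌊y⌋₊, a n / √(n:ℝ) ≤ 2 * ((|c| + B) * (1+ℓ)^k) * √y := by
      refine (sum_div_sqrt_le a ((|c| + B) * (1+ℓ)^k) ⌊y⌋₊
        ?_ (by positivity)).trans ?_
      · intro m hm1 hm
        have hm1' : (1:ℝ) ≤ m := by exact_mod_cast hm1
        have hmy : (m:ℝ) ≤ y := (Nat.le_floor_iff hy0.le).1 hm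
        have hm0 : (0:ℝ) < m := by linarith
        have hH := h m hm1'
        have hlm := log_facts hm1'
        have e : sm a m = ∑ n ∈ Ioc 0 m, a n := by unfold sm; rw [Nat.floor_natCast]
        rw [e] at hH
        have hlog : Real.log m ≤ ℓ := Real.log_le_log hm0 hmy
        have hp1 : Real.log m ^ k ≤ (1+ℓ)^k := pow_le_pow_left₀ hlm.1 (by linarith) k
        have hp2 : (1 + Real.log m) ^ k ≤ (1+ℓ)^k :=
          pow_le_pow_left₀ (by linarith [hlm.1]) (by linarith) k
        have h3 : c * m * Real.log m ^ k ≤ |c| * m * (1+ℓ)^k := by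
          have := le_abs_self c
          have := hlm.1
          calc c * m * Real.log m ^ k ≤ |c| * m * Real.log m ^ k := by gcongr
            _ ≤ _ := by gcongr
        have h4 : B * m * (1 + Real.log m) ^ k / √(1 + Real.log m) ≤ B * m * (1+ℓ)^k := by
          have h5 : 0 ≤ B * m * (1 + Real.log m) ^ k := by
            have := hlm.1
            positivity
          refine (div_le_self h5 hlm.2.1).trans ?_
          gcongr
        have := (abs_le.1 hH).2
        linarith
      · gcongr
        exact Nat.floor_le hy0.le
    have hsum1 : |∑ n ∈ Ioc 0 ⌊y⌋₊, a n * sm (rA χ) (y / n) -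
        L1 * y * ∑ n ∈ Ioc 0 ⌊y⌋₊, a n / n| ≤ B0 * √y * ∑ n ∈ Ioc 0 ⌊y⌋₊, a n / √(n:ℝ) := by
      rw [mul_sum, mul_sum, ← sum_sub_distrib]
      refine (abs_sum_le_sum_abs _ _).trans (sum_le_sum fun n hn => ?_)
      have hn' := mem_Ioc.1 hn
      have hn0 : (0:ℝ) < n := by exact_mod_cast hn'.1
      have hny : (n:ℝ) ≤ y := (Nat.le_floor_iff hy0.le).1 hn'.2
      have h3 := h0 (y / n) ((one_le_div hn0).2 hny)
      have e : a n * sm (rA χ) (y / n) - L1 * y * (a n / n) =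
        a n * (sm (rA χ) (y / n) - L1 * (y / n)) := by ring
      rw [e, abs_mul, abs_of_nonneg (ha0 n)]
      calc _ ≤ a n * (B0 * √(y / n)) := mul_le_mul_of_nonneg_left h3 (ha0 n)
        _ = _ := by rw [Real.sqrt_div hy0.le]; ring
    have hc2 : L1 ^ (k+1+1) / ((k+1).factorial : ℝ) * y * ℓ^(k+1) =
        L1 * y * (c / (k+1) * ℓ^(k+1)) := by
      rw [hc, Nat.factorial_succ]
      push_cast
      have : (k.factorial : ℝ) ≠ 0 := by positivity
      field_simp
      ring
    rw [hc2]
    have e2 : (1+ℓ)^(k+1) / s = (1+ℓ)^k * s := by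
      rw [pow_succ, ← hss]; field_simp
    rw [mul_div_assoc, e2]
    have hA : B0 * √y * ∑ n ∈ Ioc 0 ⌊y⌋₊, a n / √(n:ℝ) ≤
        2 * B0 * (|c| + B) * (y * ((1+ℓ)^k * s)) := by
      calc _ ≤ B0 * √y * (2 * ((|c| + B) * (1+ℓ)^k) * √y) := by gcongr
        _ = 2 * B0 * (|c| + B) * ((√y * √y) * (1+ℓ)^k) := by ring
        _ = 2 * B0 * (|c| + B) * (y * (1+ℓ)^k) := by rw [Real.mul_self_sqrt hy0.le]
        _ ≤ _ := by
          gcongr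
          exact le_mul_of_one_le_right hpow.le hs1
    have hBd : |L1 * y * ∑ n ∈ Ioc 0 ⌊y⌋₊, a n / n - L1 * y * (c / (k+1) * ℓ^(k+1))| ≤
        |L1| * (|c| + 3 * B) * (y * ((1+ℓ)^k * s)) := by
      rw [← mul_sub, abs_mul, abs_mul, abs_of_pos hy0]
      calc _ ≤ |L1| * y * ((|c| + 3 * B) * (1+ℓ)^k * s) := by gcongr
        _ = _ := by ring
    have := abs_sub_le (∑ n ∈ Ioc 0 ⌊y⌋₊, a n * sm (rA χ) (y / n))
      (L1 * y * ∑ n ∈ Ioc 0 ⌊y⌋₊, a n / n) (L1 * y * (c / (k+1) * ℓ^(k+1)))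
    linarith

end MV


namespace MV

/-- Sum of `log p / p` over primes up to `n`, written over all integers. -/
noncomputable def plog (n : ℕ) : ℝ := ∑ p ∈ (Ioc 0 n).filter Nat.Prime, Real.log p / p

noncomputable def pinv (n : ℕ) : ℝ := ∑ p ∈ (Ioc 0 n).filter Nat.Prime, 1 / (p:ℝ)

lemma plog_le (n : ℕ) (hn : 1 ≤ n) : plog n ≤ Real.log n + Real.log 4 := by
  have hn0 : (0:ℝ) < n := by exact_mod_cast hn
  have h1 := ArithmeticFunction.sum_Ioc_mul_zeta_eq_sum ArithmeticFunction.vonMangoldt n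
  rw [ArithmeticFunction.vonMangoldt_mul_zeta] at h1
  have h2 : ∑ m ∈ Ioc 0 n, ArithmeticFunction.log m ≤ n * Real.log n := by
    calc _ ≤ ∑ m ∈ Ioc 0 n, Real.log n := by
          refine sum_le_sum fun m hm => ?_
          have hm := mem_Ioc.1 hm
          rw [ArithmeticFunction.log_apply]
          exact Real.log_le_log (by exact_mod_cast hm.1) (by exact_mod_cast hm.2)
      _ = _ := by simp
  have h3 : ∑ p ∈ (Ioc 0 n).filter Nat.Prime, Real.log p * ((n:ℝ) / p - 1) ≤
      ∑ m ∈ Ioc 0 n, ArithmeticFunction.vonMangoldt m * ((n / m : ℕ) : ℝ) := by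
    refine le_trans (sum_le_sum fun p hp => ?_) (sum_le_sum_of_subset_of_nonneg
      (filter_subset Nat.Prime _) fun i _ _ => mul_nonneg
        ArithmeticFunction.vonMangoldt_nonneg (Nat.cast_nonneg _))
    have hp' := (mem_filter.1 hp).2
    rw [ArithmeticFunction.vonMangoldt_apply_prime hp']
    have hp1 : (1:ℝ) ≤ p := by exact_mod_cast hp'.one_lt.le
    refine mul_le_mul_of_nonneg_left ?_ (Real.log_nonneg hp1)
    have : ((n:ℝ) / p) < (n / p : ℕ) + 1 := by
      rw [← Nat.floor_div_eq_div (K := ℝ)]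
      exact Nat.lt_floor_add_one _
    linarith
  have h4 : ∑ p ∈ (Ioc 0 n).filter Nat.Prime, Real.log p * ((n:ℝ) / p - 1) =
      n * plog n - Chebyshev.theta n := by
    unfold plog Chebyshev.theta
    rw [Nat.floor_natCast, mul_sum, ← sum_sub_distrib]
    exact sum_congr rfl fun p _ => by ring
  have h5 := Chebyshev.theta_le_log4_mul_x (x := n) hn0.le
  have h6 : n * plog n ≤ n * (Real.log n + Real.log 4) := by
    rw [h4, ← h1] at h3
    linarith
  exact le_of_mul_le_mul_left h6 hn0

lemma pinv_le_aux (n : ℕ) (hn : 2 ≤ n) : pinv n ≤ plog n / Real.log n + Real.log (Real.log n) +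
    Real.log 4 * (1 / Real.log 2 - 1 / Real.log n) - Real.log (Real.log 2) := by
  induction n, hn using Nat.le_induction with
  | base =>
    have hl2 : 0 < Real.log 2 := Real.log_pos (by norm_num)
    have e : (Ioc 0 2).filter Nat.Prime = {2} := by decide
    unfold pinv plog
    rw [e]
    simp only [sum_singleton, Nat.cast_ofNat]
    have : Real.log 2 / 2 / Real.log 2 = 1 / 2 := by field_simp
    rw [this]; linarith
  | succ n hn ih =>
    have hn1 : (1:ℝ) < n := by exact_mod_cast hn
    have hl : 0 < Real.log n := Real.log_pos hn1
    have hcast : (((n+1 : ℕ)):ℝ) = n + 1 := by push_cast; ring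
    have hl' : 0 < Real.log ((n+1 : ℕ):ℝ) := Real.log_pos (by rw [hcast]; linarith)
    have hll : Real.log n ≤ Real.log ((n+1 : ℕ):ℝ) :=
      Real.log_le_log (by linarith) (by rw [hcast]; linarith)
    have hstep : pinv (n+1) - plog (n+1) / Real.log ((n+1 : ℕ):ℝ) =
        pinv n - plog n / Real.log ((n+1 : ℕ):ℝ) := by
      unfold pinv plog
      rw [← Finset.insert_Ioc_right_eq_Ioc_add_one (Nat.zero_le n), filter_insert]
      split_ifs with hp
      · rw [sum_insert (by simp), sum_insert (by simp)]
        field_simp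
        ring
      · rfl
    set A := plog n
    set x := Real.log n
    set y := Real.log ((n+1 : ℕ):ℝ)
    have hA := plog_le n (by omega)
    have hA' : A * (1/x - 1/y) ≤ (x + Real.log 4) * (1/x - 1/y) :=
      mul_le_mul_of_nonneg_right hA (sub_nonneg.2 (one_div_le_one_div_of_le hl hll))
    have h1 : x * (1/x - 1/y) ≤ Real.log y - Real.log x := by
      have := Real.one_sub_inv_le_log_of_pos (div_pos hl' hl)
      rw [Real.log_div hl'.ne' hl.ne', inv_div] at this
      have e : x * (1/x - 1/y) = 1 - x / y := by field_simp
      linarith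
    have e1 : A / y = A / x - A * (1/x - 1/y) := by ring
    have e2 : (x + Real.log 4) * (1/x - 1/y) = x * (1/x - 1/y) + Real.log 4 * (1/x - 1/y) := by
      ring
    rw [e1] at hstep
    have e3 : Real.log 4 * (1 / Real.log 2 - 1 / y) =
      Real.log 4 * (1 / Real.log 2 - 1 / x) + Real.log 4 * (1/x - 1/y) := by ring
    rw [e3]
    linarith

lemma pinv_le : ∃ B : ℝ, ∀ n : ℕ, 2 ≤ n → pinv n ≤ Real.log (Real.log n) + B := by
  refine ⟨1 + 2 * Real.log 4 / Real.log 2 - Real.log (Real.log 2), fun n hn => ?_⟩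
  have h := pinv_le_aux n hn
  have hl2 : 0 < Real.log 2 := Real.log_pos (by norm_num)
  have hl4 : 0 < Real.log 4 := Real.log_pos (by norm_num)
  have hn2 : (2:ℝ) ≤ n := by exact_mod_cast hn
  have hl : Real.log 2 ≤ Real.log n := Real.log_le_log (by norm_num) hn2
  have hl0 : 0 < Real.log n := by linarith
  have h1 : plog n / Real.log n ≤ 1 + Real.log 4 / Real.log 2 := by
    calc plog n / Real.log n ≤ (Real.log n + Real.log 4) / Real.log n := by
          gcongr
          exact plog_le n (by omega)
      _ = 1 + Real.log 4 / Real.log n := by field_simp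
      _ ≤ _ := by gcongr
  have h2 : Real.log 4 * (1 / Real.log 2 - 1 / Real.log n) ≤ Real.log 4 / Real.log 2 := by
    have : 0 ≤ Real.log 4 * (1 / Real.log n) := by positivity
    have e : Real.log 4 * (1 / Real.log 2 - 1 / Real.log n) =
      Real.log 4 / Real.log 2 - Real.log 4 * (1 / Real.log n) := by ring
    linarith
  have e : 2 * Real.log 4 / Real.log 2 = Real.log 4 / Real.log 2 + Real.log 4 / Real.log 2 := by
    ring
  linarith

/-- `L_N`. -/
noncomputable def LN (N : ℕ) : ℝ := Real.log ((N.primeFactors.card : ℝ) + 3)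

/-- Rankin exponent. -/
noncomputable def dN (N : ℕ) : ℝ := 1 / (4 * LN N)

lemma one_le_LN (N : ℕ) : 1 ≤ LN N := by
  unfold LN
  rw [Real.le_log_iff_exp_le (by positivity)]
  have := Real.exp_one_lt_d9
  have : (0:ℝ) ≤ N.primeFactors.card := Nat.cast_nonneg _
  linarith

lemma dN_pos (N : ℕ) : 0 < dN N := by
  have := one_le_LN N
  unfold dN; positivity

lemma dN_le (N : ℕ) : dN N ≤ 1 / 4 := by
  have := one_le_LN N
  unfold dN
  apply one_div_le_one_div_of_le <;> linarith

lemma exp_le_lin {x : ℝ} (h0 : 0 ≤ x) (h1 : x ≤ 1/4) : Real.exp x ≤ 1 + 2 * x := by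
  have h := Real.one_sub_le_exp_neg x
  have h2 : Real.exp x * Real.exp (-x) = 1 := by rw [← Real.exp_add]; simp
  have h3 := Real.exp_pos x
  nlinarith

lemma sum_primeFactors_le : ∃ B : ℝ, 0 < B ∧ ∀ N : ℕ,
    ∑ p ∈ N.primeFactors, (p:ℝ) ^ (dN N - 1) ≤ Real.log (LN N) + B := by
  obtain ⟨B, hB⟩ := pinv_le
  refine ⟨|B| + 6, by positivity, fun N => ?_⟩
  set K := N.primeFactors.card + 3 with hK
  have hKc : ((K:ℕ):ℝ) = (N.primeFactors.card : ℝ) + 3 := by rw [hK]; push_cast; ring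
  have hLK : Real.log K = LN N := by rw [hKc]; rfl
  have hL := one_le_LN N
  have hd := dN_pos N
  have hd4 := dN_le N
  have hK0 : (0:ℝ) < K := by rw [hKc]; positivity
  have hdL : dN N * LN N = 1/4 := by unfold dN; field_simp
  rw [← sum_filter_add_sum_filter_not N.primeFactors (fun p => p ≤ K)]
  have h1 : ∑ p ∈ N.primeFactors with p ≤ K, (p:ℝ) ^ (dN N - 1) ≤
      pinv K + 2 * dN N * plog K := by
    unfold pinv plog
    rw [mul_sum, ← sum_add_distrib]
    have hsub : (N.primeFactors.filter fun p => p ≤ K) ⊆ (Ioc 0 K).filter Nat.Prime := by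
      intro p hp
      rw [mem_filter] at hp
      have hpp := Nat.prime_of_mem_primeFactors hp.1
      simp only [mem_filter, mem_Ioc]
      exact ⟨⟨hpp.pos, hp.2⟩, hpp⟩
    refine le_trans (sum_le_sum_of_subset_of_nonneg hsub fun i _ _ => by positivity) ?_
    refine sum_le_sum fun p hp => ?_
    simp only [mem_filter, mem_Ioc] at hp
    have hp1 : (1:ℝ) ≤ p := by exact_mod_cast hp.2.one_lt.le
    have hp0 : (0:ℝ) < p := by linarith
    rw [Real.rpow_sub hp0, Real.rpow_one, Real.rpow_def_of_pos hp0]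
    have hlp : Real.log p ≤ LN N := by
      rw [← hLK]; exact Real.log_le_log hp0 (by exact_mod_cast hp.1.2)
    have hlp0 := Real.log_nonneg hp1
    have hx : Real.log p * dN N ≤ 1/4 := by nlinarith
    have := exp_le_lin (mul_nonneg hlp0 hd.le) hx
    rw [div_le_iff₀ hp0]
    have e : (1 / (p:ℝ) + 2 * dN N * (Real.log p / p)) * p = 1 + 2 * (Real.log p * dN N) := by
      field_simp
    rw [e]; exact this
  have h2 : ∑ p ∈ N.primeFactors with ¬ p ≤ K, (p:ℝ) ^ (dN N - 1) ≤ 2 := by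
    calc _ ≤ ∑ p ∈ N.primeFactors with ¬ p ≤ K, (2 / (K:ℝ)) := by
          refine sum_le_sum fun p hp => ?_
          rw [mem_filter, not_le] at hp
          have hpK : (K:ℝ) ≤ p := by exact_mod_cast hp.2.le
          refine (Real.rpow_le_rpow_of_nonpos hK0 hpK (by linarith)).trans ?_
          rw [Real.rpow_sub hK0, Real.rpow_one, Real.rpow_def_of_pos hK0, hLK, mul_comm (LN N), hdL]
          gcongr
          have := exp_le_lin (x := 1/4) (by norm_num) le_rfl
          linarith
      _ = ((N.primeFactors.filter (fun p => ¬ p ≤ K)).card : ℝ) * (2 / K) := by simp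
      _ ≤ (N.primeFactors.card : ℝ) * (2 / K) := by
          gcongr
          exact filter_subset _ _
      _ ≤ 2 := by
          rw [mul_div_assoc', div_le_iff₀ hK0, hKc]; linarith
  have h3 := hB K (by omega)
  have h4 := plog_le K (by omega)
  rw [hLK] at h3 h4
  have hl4 : Real.log 4 ≤ 3 := by
    have := Real.log_le_sub_one_of_pos (x := 4) (by norm_num); linarith
  have h5 : 2 * dN N * plog K ≤ 4 := by
    calc 2 * dN N * plog K ≤ 2 * dN N * (LN N + 3) := by gcongr; linarith
      _ = 2 * (dN N * LN N) + 6 * dN N := by ring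
      _ ≤ 4 := by rw [hdL]; linarith
  have := le_abs_self B
  linarith

end MV


namespace MV

/-- Local power series at `p`. -/
noncomputable def loc (p : ℕ) (a : ArithmeticFunction ℝ) : PowerSeries ℝ :=
  PowerSeries.mk fun e => a (p ^ e)

lemma loc_mul {p : ℕ} (hp : p.Prime) (a b : ArithmeticFunction ℝ) :
    loc p (a * b) = loc p a * loc p b := by
  ext e
  rw [PowerSeries.coeff_mul]
  simp only [loc, PowerSeries.coeff_mk]
  rw [ArithmeticFunction.mul_apply, Nat.sum_divisorsAntidiagonal (fun i j => a i * b j),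
    Nat.divisors_prime_pow hp, sum_map,
    Finset.Nat.sum_antidiagonal_eq_sum_range_succ (fun i j => a (p ^ i) * b (p ^ j))]
  refine sum_congr rfl fun i hi => ?_
  have hi := Nat.lt_succ_iff.1 (mem_range.1 hi)
  simp only [Function.Embedding.coeFn_mk]
  rw [Nat.pow_div hi hp.pos]

lemma loc_one {p : ℕ} (hp : p.Prime) : loc p 1 = 1 := by
  ext e
  simp only [loc, PowerSeries.coeff_mk, PowerSeries.coeff_one]
  rw [ArithmeticFunction.one_apply]
  simp [hp.one_lt.ne']

lemma loc_pow {p : ℕ} (hp : p.Prime) (a : ArithmeticFunction ℝ) (k : ℕ) :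
    loc p (a ^ k) = loc p a ^ k := by
  induction k with
  | zero => simp [loc_one hp]
  | succ k ih => rw [pow_succ, pow_succ, loc_mul hp, ih]

/-- `μ χ`. -/
noncomputable def muChi {q : ℕ} (χ : DirichletCharacter ℝ q) : ArithmeticFunction ℝ :=
  ⟨fun n => (ArithmeticFunction.moebius n : ℝ) * χ (n : ZMod q), by simp⟩

lemma muChi_apply {q : ℕ} (χ : DirichletCharacter ℝ q) (n : ℕ) :
    muChi χ n = (ArithmeticFunction.moebius n : ℝ) * χ (n : ZMod q) := rfl

lemma muChi_mult {q : ℕ} (χ : DirichletCharacter ℝ q) : (muChi χ).IsMultiplicative := by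
  refine ⟨by simp [muChi_apply], fun {m n} h => ?_⟩
  simp only [muChi_apply]
  rw [ArithmeticFunction.isMultiplicative_moebius.map_mul_of_coprime h]
  push_cast
  rw [map_mul]; ring

lemma muChi_mul_chiA {q : ℕ} (χ : DirichletCharacter ℝ q) : muChi χ * chiA χ = 1 := by
  ext n
  rcases eq_or_ne n 0 with rfl | hn
  · simp
  rw [ArithmeticFunction.mul_apply]
  have h : ∀ x ∈ n.divisorsAntidiagonal, muChi χ x.1 * chiA χ x.2 =
      χ (n : ZMod q) * ((ArithmeticFunction.moebius x.1 : ℝ) *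
        (ArithmeticFunction.zeta : ArithmeticFunction ℝ) x.2) := by
    intro x hx
    have hx := Nat.mem_divisorsAntidiagonal.1 hx
    have h2 : x.2 ≠ 0 := by rintro h; apply hn; rw [← hx.1, h, mul_zero]
    rw [muChi_apply, chiA_apply χ h2, ← hx.1]
    simp [ArithmeticFunction.natCoe_apply, h2]
    ring
  rw [sum_congr rfl h, ← mul_sum]
  have h2 := congrArg (fun a : ArithmeticFunction ℝ => a n)
    (ArithmeticFunction.coe_moebius_mul_coe_zeta (R := ℝ))
  simp only [ArithmeticFunction.mul_apply, ArithmeticFunction.intCoe_apply] at h2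
  rw [h2, ArithmeticFunction.one_apply]
  split_ifs with h3
  · subst h3; simp
  · simp

noncomputable def fA {q : ℕ} (χ : DirichletCharacter ℝ q) (η N : ℕ) : ArithmeticFunction ℝ :=
  ⟨fun n => if Nat.gcd n N = 1 then
    ((ArithmeticFunction.moebius n : ℝ)) ^ 2 * (η : ℝ) ^ n.primeFactors.card * rA χ n else 0,
    by simp⟩

lemma fA_apply {q : ℕ} (χ : DirichletCharacter ℝ q) (η N n : ℕ) :
    fA χ η N n = if Nat.gcd n N = 1 then
    ((ArithmeticFunction.moebius n : ℝ)) ^ 2 * (η : ℝ) ^ n.primeFactors.card * rA χ n else 0 := rfl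

lemma fA_mult {q : ℕ} (χ : DirichletCharacter ℝ q) (η N : ℕ) :
    (fA χ η N).IsMultiplicative := by
  refine ⟨by simp [fA_apply, (rA_mult χ).map_one], fun {m n} h => ?_⟩
  simp only [fA_apply]
  rw [(rA_mult χ).map_mul_of_coprime h,
    ArithmeticFunction.isMultiplicative_moebius.map_mul_of_coprime h,
    h.primeFactors_mul, card_union_of_disjoint h.disjoint_primeFactors, pow_add]
  have h1 : (m * n).gcd N = 1 ↔ m.gcd N = 1 ∧ n.gcd N = 1 := Nat.coprime_mul_iff_left
  rw [Int.cast_mul]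
  by_cases hm : m.gcd N = 1 <;> by_cases hn : n.gcd N = 1 <;> simp [h1, hm, hn]
  ring

noncomputable def gA {q : ℕ} (χ : DirichletCharacter ℝ q) (η N : ℕ) : ArithmeticFunction ℝ :=
  fA χ η N * ((ArithmeticFunction.moebius : ArithmeticFunction ℝ) * muChi χ) ^ η

lemma gA_mult {q : ℕ} (χ : DirichletCharacter ℝ q) (η N : ℕ) :
    (gA χ η N).IsMultiplicative := by
  unfold gA
  refine (fA_mult χ η N).mul ?_
  exact (ArithmeticFunction.isMultiplicative_moebius.intCast.mul (muChi_mult χ)).pow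

lemma gA_mul {q : ℕ} (χ : DirichletCharacter ℝ q) (η N : ℕ) :
    gA χ η N * rA χ ^ η = fA χ η N := by
  unfold gA rA
  have : (ArithmeticFunction.moebius : ArithmeticFunction ℝ) * muChi χ *
      (chiA χ * (ArithmeticFunction.zeta : ArithmeticFunction ℝ)) = 1 := by
    calc _ = (muChi χ * chiA χ) * ((ArithmeticFunction.moebius : ArithmeticFunction ℝ) *
        (ArithmeticFunction.zeta : ArithmeticFunction ℝ)) := by ring
      _ = 1 := by rw [muChi_mul_chiA, ArithmeticFunction.coe_moebius_mul_coe_zeta, one_mul]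
  rw [mul_assoc, ← mul_pow, this, one_pow, mul_one]

open Polynomial in
noncomputable def Qp (c a : ℝ) (η : ℕ) : Polynomial ℝ :=
  (1 + C c * X) * ((1 - X) * (1 - C a * X)) ^ η

noncomputable def fp {q : ℕ} (χ : DirichletCharacter ℝ q) (η N p : ℕ) : ℝ :=
  if p ∣ N then 0 else η * (1 + χ (p : ZMod q))

lemma loc_f {q : ℕ} (χ : DirichletCharacter ℝ q) (η N : ℕ) {p : ℕ} (hp : p.Prime) :
    loc p (fA χ η N) = ((1 + Polynomial.C (fp χ η N p) * Polynomial.X : Polynomial ℝ) :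
      PowerSeries ℝ) := by
  ext e
  rw [Polynomial.coeff_coe]
  simp only [loc, PowerSeries.coeff_mk, Polynomial.coeff_add, Polynomial.coeff_one,
    Polynomial.coeff_C_mul, Polynomial.coeff_X]
  rcases e with _ | _ | e
  · simp [(fA_mult χ η N).map_one]
  · simp only [zero_add, pow_one]
    rw [fA_apply, fp, rA_apply, ArithmeticFunction.moebius_apply_prime hp, hp.primeFactors,
      hp.sum_divisors]
    have : p.gcd N = 1 ↔ ¬ p ∣ N := hp.coprime_iff_not_dvd
    simp only [this]
    by_cases h : p ∣ N <;> simp [h]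
    left; ring
  · rw [fA_apply, ArithmeticFunction.moebius_apply_prime_pow hp (by omega)]
    simp

lemma loc_mu {p : ℕ} (hp : p.Prime) :
    loc p (ArithmeticFunction.moebius : ArithmeticFunction ℝ) =
      ((1 - Polynomial.X : Polynomial ℝ) : PowerSeries ℝ) := by
  ext e
  rw [Polynomial.coeff_coe]
  simp only [loc, PowerSeries.coeff_mk, Polynomial.coeff_sub, Polynomial.coeff_one,
    Polynomial.coeff_X, ArithmeticFunction.intCoe_apply]
  rcases e with _ | _ | e
  · simp
  · simp [ArithmeticFunction.moebius_apply_prime hp]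
  · rw [ArithmeticFunction.moebius_apply_prime_pow hp (by omega)]
    simp

lemma loc_muChi {q : ℕ} (χ : DirichletCharacter ℝ q) {p : ℕ} (hp : p.Prime) :
    loc p (muChi χ) =
      ((1 - Polynomial.C (χ (p : ZMod q)) * Polynomial.X : Polynomial ℝ) : PowerSeries ℝ) := by
  ext e
  rw [Polynomial.coeff_coe]
  simp only [loc, PowerSeries.coeff_mk, Polynomial.coeff_sub, Polynomial.coeff_one,
    Polynomial.coeff_C_mul, Polynomial.coeff_X, muChi_apply]
  rcases e with _ | _ | e
  · simp
  · simp [ArithmeticFunction.moebius_apply_prime hp]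
  · rw [ArithmeticFunction.moebius_apply_prime_pow hp (by omega)]
    simp

lemma gA_prime_pow {q : ℕ} (χ : DirichletCharacter ℝ q) (η N : ℕ) {p : ℕ} (hp : p.Prime) (e : ℕ) :
    gA χ η N (p ^ e) = (Qp (fp χ η N p) (χ (p : ZMod q)) η).coeff e := by
  have h : loc p (gA χ η N) = ((Qp (fp χ η N p) (χ (p : ZMod q)) η : Polynomial ℝ) :
      PowerSeries ℝ) := by
    unfold gA Qp
    rw [loc_mul hp, loc_pow hp, loc_mul hp, loc_f χ η N hp, loc_mu hp, loc_muChi χ hp]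
    rw [Polynomial.coe_mul, Polynomial.coe_pow, Polynomial.coe_mul]
  have h2 := congrArg (PowerSeries.coeff e) h
  rw [Polynomial.coeff_coe] at h2
  simpa only [loc, PowerSeries.coeff_mk] using h2

/-- Coefficient domination. -/
def Dom (P Q : Polynomial ℝ) : Prop := ∀ e, |P.coeff e| ≤ Q.coeff e

lemma Dom.mul {P Q P' Q' : Polynomial ℝ} (h : Dom P Q) (h' : Dom P' Q') :
    Dom (P * P') (Q * Q') := by
  intro e
  rw [Polynomial.coeff_mul, Polynomial.coeff_mul]
  refine (abs_sum_le_sum_abs _ _).trans (sum_le_sum fun x _ => ?_)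
  rw [abs_mul]
  exact mul_le_mul (h _) (h' _) (abs_nonneg _) ((abs_nonneg _).trans (h _))

lemma Dom.one : Dom 1 1 := by
  intro e
  rw [Polynomial.coeff_one]; split_ifs <;> simp

lemma Dom.pow {P Q : Polynomial ℝ} (h : Dom P Q) (k : ℕ) : Dom (P ^ k) (Q ^ k) := by
  induction k with
  | zero => simpa using Dom.one
  | succ k ih => rw [pow_succ, pow_succ]; exact ih.mul h

lemma Dom.lin {a b : ℝ} (h : |a| ≤ b) : Dom (1 + Polynomial.C a * Polynomial.X)
    (1 + Polynomial.C b * Polynomial.X) := by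
  intro e
  rcases e with _ | _ | e <;> simp [Polynomial.coeff_one, Polynomial.coeff_X, h]

/-- dominating polynomial -/
noncomputable def DP (b : ℝ) (η : ℕ) : Polynomial ℝ :=
  (1 + Polynomial.C b * Polynomial.X) * ((1 + Polynomial.X) * (1 + Polynomial.X)) ^ η

lemma Qp_dom {c a b : ℝ} (hc : |c| ≤ b) (ha : |a| ≤ 1) (η : ℕ) : Dom (Qp c a η) (DP b η) := by
  unfold Qp DP
  refine (Dom.lin hc).mul (Dom.pow (Dom.mul ?_ ?_) η)
  · have := Dom.lin (a := -1) (b := 1) (by simp)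
    simpa [sub_eq_add_neg] using this
  · have := Dom.lin (a := -a) (b := 1) (by simpa using ha)
    simpa [sub_eq_add_neg] using this

lemma Qp_coeff_zero (c a : ℝ) (η : ℕ) : (Qp c a η).coeff 0 = 1 := by
  rw [Polynomial.coeff_zero_eq_eval_zero]; simp [Qp]

lemma Qp_coeff_one (a : ℝ) (η : ℕ) : (Qp (η * (1 + a)) a η).coeff 1 = 0 := by
  have h : (Qp (η * (1 + a)) a η).coeff 1 = (Polynomial.derivative (Qp (η * (1 + a)) a η)).eval 0 := by
    rw [← Polynomial.coeff_zero_eq_eval_zero, Polynomial.coeff_derivative]; simp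
  rw [h, Qp]
  simp [Polynomial.derivative_pow]
  ring

end MV


namespace MV

lemma poly_hasSum (P : Polynomial ℝ) (y : ℝ) :
    HasSum (fun e => P.coeff e * y ^ e) (P.eval y) := by
  rw [Polynomial.eval_eq_sum_range]
  refine hasSum_sum_of_ne_finset_zero fun e he => ?_
  rw [mem_range, not_lt] at he
  rw [Polynomial.coeff_eq_zero_of_natDegree_lt (by omega), zero_mul]

lemma abs_summable (P : Polynomial ℝ) (y : ℝ) :
    Summable (fun e => |P.coeff e| * y ^ e) := by
  refine summable_of_ne_finset_zero (s := range (P.natDegree + 1)) fun e he => ?_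
  rw [mem_range, not_lt] at he
  rw [Polynomial.coeff_eq_zero_of_natDegree_lt (by omega), abs_zero, zero_mul]

lemma loc_le_one {a : ℝ} (ha : |a| ≤ 1) (η : ℕ) {y : ℝ} (hy : 0 ≤ y) :
    ∑' e, |(Qp 0 a η).coeff e| * y ^ e ≤ Real.exp (2 * η * y) := by
  have h1 : ∑' e, |(Qp 0 a η).coeff e| * y ^ e ≤ (DP 0 η).eval y := by
    refine (abs_summable _ y).tsum_le_of_sum_le ?_ |>.trans le_rfl
    intro s
    refine le_trans (sum_le_sum fun e _ => ?_)
      ((poly_hasSum (DP 0 η) y).summable.sum_le_tsum s fun e _ => ?_) |>.trans_eq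
        (poly_hasSum (DP 0 η) y).tsum_eq
    · exact mul_le_mul_of_nonneg_right (Qp_dom (by simp) ha η e) (by positivity)
    · exact mul_nonneg ((abs_nonneg _).trans (Qp_dom (c := 0) (by simp) ha η e)) (by positivity)
  refine h1.trans ?_
  have h2 : (DP 0 η).eval y = (1 + y) ^ (2 * η) := by
    simp [DP]; rw [pow_mul]; ring
  rw [h2]
  have h3 : 1 + y ≤ Real.exp y := by linarith [Real.add_one_le_exp y]
  calc (1 + y) ^ (2 * η) ≤ Real.exp y ^ (2 * η) := by gcongr
    _ = _ := by rw [← Real.exp_nat_mul]; push_cast; rfl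

lemma hc_le {a : ℝ} (ha : |a| ≤ 1) (η : ℕ) : |(η:ℝ) * (1 + a)| ≤ 2 * η := by
  rw [abs_mul, Nat.abs_cast]
  have : |1 + a| ≤ 2 := by
    have := abs_add_le 1 a
    rw [abs_one] at this; linarith
  nlinarith [Nat.cast_nonneg (α := ℝ) η]

lemma loc_term_le {a : ℝ} (ha : |a| ≤ 1) (η : ℕ) {y : ℝ} (hy : 0 ≤ y) (hy1 : y ≤ 1) (e : ℕ) :
    |(Qp (η * (1 + a)) a η).coeff (e + 1)| * y ^ (e + 1) ≤
      (DP (2 * η) η).coeff (e + 1) * y ^ 2 := by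
  have hd := Qp_dom (hc_le ha η) ha η (e + 1)
  have h0 := (abs_nonneg _).trans hd
  rcases e with _ | e
  · rw [Qp_coeff_one]; simp only [abs_zero, zero_mul]; positivity
  · refine mul_le_mul hd (pow_le_pow_of_le_one hy hy1 (by omega)) (by positivity) h0

lemma DP_nonneg (η e : ℕ) : 0 ≤ (DP (2 * η) η).coeff e :=
  (abs_nonneg _).trans (Qp_dom (hc_le (a := 0) (by simp) η) (a := 0) (by simp) η e)

lemma loc_le_tail {a : ℝ} (ha : |a| ≤ 1) (η : ℕ) {y : ℝ} (hy : 0 ≤ y) (hy1 : y ≤ 1) :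
    ∑' e, |(Qp (η * (1 + a)) a η).coeff (e + 1)| * y ^ (e + 1) ≤
      (DP (2 * η) η).eval 1 * y ^ 2 := by
  have hs := (poly_hasSum (DP (2 * η) η) 1)
  simp only [one_pow, mul_one] at hs
  have hs1 := (summable_nat_add_iff 1).2 hs.summable
  have hle : ∑' e, (DP (2 * η) η).coeff (e + 1) ≤ (DP (2 * η) η).eval 1 := by
    rw [← hs.tsum_eq, hs.summable.tsum_eq_zero_add]
    linarith [DP_nonneg η 0]
  refine le_trans (Summable.tsum_le_tsum (loc_term_le ha η hy hy1)
    ((summable_nat_add_iff 1).2 (abs_summable (Qp (η * (1 + a)) a η) y)) (hs1.mul_right _)) ?_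
  rw [tsum_mul_right]
  exact mul_le_mul_of_nonneg_right hle (by positivity)

lemma loc_le_two {a : ℝ} (ha : |a| ≤ 1) (η : ℕ) {y : ℝ} (hy : 0 ≤ y) (hy1 : y ≤ 1) :
    ∑' e, |(Qp (η * (1 + a)) a η).coeff e| * y ^ e ≤
      Real.exp ((DP (2 * η) η).eval 1 * y ^ 2) := by
  rw [(abs_summable (Qp (η * (1 + a)) a η) y).tsum_eq_zero_add, Qp_coeff_zero]
  have := loc_le_tail ha η hy hy1
  have h2 := Real.add_one_le_exp ((DP (2 * η) η).eval 1 * y ^ 2)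
  simp only [abs_one, pow_zero, mul_one]
  linarith

lemma eval_sub_one {a : ℝ} (ha : |a| ≤ 1) (η : ℕ) {y : ℝ} (hy : 0 ≤ y) (hy1 : y ≤ 1) :
    |(Qp (η * (1 + a)) a η).eval y - 1| ≤ (DP (2 * η) η).eval 1 * y ^ 2 := by
  have h := poly_hasSum (Qp (η * (1 + a)) a η) y
  rw [← h.tsum_eq, h.summable.tsum_eq_zero_add, Qp_coeff_zero]
  simp only [pow_zero, mul_one, add_sub_cancel_left]
  refine le_trans ?_ (loc_le_tail ha η hy hy1)
  have h1 := (summable_nat_add_iff 1).2 (abs_summable (Qp (η * (1 + a)) a η) y)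
  have h2 : ∀ e, ‖(Qp (η * (1 + a)) a η).coeff (e + 1) * y ^ (e + 1)‖ =
      |(Qp (η * (1 + a)) a η).coeff (e + 1)| * y ^ (e + 1) := by
    intro e
    rw [Real.norm_eq_abs, abs_mul, abs_of_nonneg (pow_nonneg hy _)]
  have h3 := norm_tsum_le_tsum_norm (f := fun e =>
    (Qp (η * (1 + a)) a η).coeff (e + 1) * y ^ (e + 1)) (by simpa only [h2] using h1)
  simpa only [h2, Real.norm_eq_abs] using h3

lemma K_nonneg (η : ℕ) : 0 ≤ (DP (2 * η) η).eval 1 := by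
  unfold DP; simp; positivity

variable {q : ℕ} (χ : DirichletCharacter ℝ q)

/-- weighted absolute value of `g` -/
noncomputable def wg (η N : ℕ) (m : ℕ) : ℝ := |gA χ η N m| * (m : ℝ) ^ (dN N - 1)

lemma wg_pow (η N : ℕ) {p : ℕ} (hp : p.Prime) (e : ℕ) :
    wg χ η N (p ^ e) =
      |(Qp (fp χ η N p) (χ (p : ZMod q)) η).coeff e| * ((p : ℝ) ^ (dN N - 1)) ^ e := by
  rw [wg, gA_prime_pow χ η N hp]
  push_cast
  rw [← Real.rpow_natCast, ← Real.rpow_natCast, ← Real.rpow_mul (by positivity),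
    ← Real.rpow_mul (by positivity), mul_comm (e:ℝ)]

lemma wg_loc_le (hχval : ∀ n : ℕ, χ (n : ZMod q) ∈ ({-1, 0, 1} : Set ℝ)) (η N : ℕ) {p : ℕ} (hp : p.Prime) :
    ∑' e, wg χ η N (p ^ e) ≤
      Real.exp ((if p ∣ N then 2 * η * (p : ℝ) ^ (dN N - 1) else 0) +
        (DP (2 * η) η).eval 1 * (p : ℝ) ^ (-3/2 : ℝ)) := by
  simp only [wg_pow χ η N hp]
  have ha := abs_chi_le χ hχval p
  have hp1 : (1:ℝ) ≤ p := by exact_mod_cast hp.one_lt.le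
  have hy0 : 0 ≤ (p : ℝ) ^ (dN N - 1) := by positivity
  have hy1 : (p : ℝ) ^ (dN N - 1) ≤ 1 :=
    Real.rpow_le_one_of_one_le_of_nonpos hp1 (by linarith [dN_le N])
  have hK := K_nonneg η
  have h32 : 0 ≤ (DP (2 * η) η).eval 1 * (p : ℝ) ^ (-3/2 : ℝ) := by positivity
  unfold fp
  split_ifs with h
  · refine (loc_le_one ha η hy0).trans (Real.exp_le_exp.2 (by linarith))
  · refine (loc_le_two ha η hy0 hy1).trans (Real.exp_le_exp.2 ?_)
    rw [zero_add]
    refine mul_le_mul_of_nonneg_left ?_ hK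
    rw [← Real.rpow_natCast, ← Real.rpow_mul (by positivity)]
    refine Real.rpow_le_rpow_of_exponent_le hp1 ?_
    have := dN_le N
    push_cast; linarith

lemma wg_nonneg (η N m : ℕ) : 0 ≤ wg χ η N m := by unfold wg; positivity

lemma wg_sum (hχval : ∀ n : ℕ, χ (n : ZMod q) ∈ ({-1, 0, 1} : Set ℝ)) (η : ℕ) : ∃ B : ℝ, 0 < B ∧ ∀ N : ℕ, 1 ≤ N → ∀ n : ℕ,
    ∑ m ∈ range n, wg χ η N m ≤ B * LN N ^ (2 * η) := by
  obtain ⟨B, hB, hBN⟩ := sum_primeFactors_le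
  have hK := K_nonneg η
  have hsP : Summable (fun n : ℕ => (n:ℝ) ^ (-3/2 : ℝ)) := Real.summable_nat_rpow.2 (by norm_num)
  set S := ∑' n : ℕ, (n:ℝ) ^ (-3/2 : ℝ)
  set K := (DP (2 * η) η).eval 1 with hKdef
  refine ⟨Real.exp (2 * η * B + K * S), Real.exp_pos _, fun N hN n => ?_⟩
  have h1 : wg χ η N 1 = 1 := by simp [wg, (gA_mult χ η N).map_one]
  have hmul : ∀ {m n : ℕ}, m.Coprime n → wg χ η N (m * n) = wg χ η N m * wg χ η N n := by
    intro m n h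
    simp only [wg]
    rw [(gA_mult χ η N).map_mul_of_coprime h, abs_mul, Nat.cast_mul,
      Real.mul_rpow (by positivity) (by positivity)]
    ring
  have hs : ∀ {p : ℕ}, p.Prime → Summable (fun n : ℕ ↦ ‖wg χ η N (p ^ n)‖) := by
    intro p hp
    have : ∀ n, ‖wg χ η N (p ^ n)‖ = |(Qp (fp χ η N p) (χ (p : ZMod q)) η).coeff n| *
        ((p : ℝ) ^ (dN N - 1)) ^ n := by
      intro n
      rw [Real.norm_eq_abs, abs_of_nonneg (wg_nonneg χ η N _), wg_pow χ η N hp]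
    simp only [this]
    exact abs_summable _ _
  have hE := (EulerProduct.summable_and_hasSum_smoothNumbers_prod_primesBelow_tsum h1 hmul hs n).2
  have hle : ∑ m ∈ range n, wg χ η N m ≤ ∏ p ∈ n.primesBelow, ∑' e, wg χ η N (p ^ e) := by
    have h2 : ∑ m ∈ range n, wg χ η N m = ∑ m ∈ (range n).filter (0 < ·), wg χ η N m := by
      rw [sum_filter_of_ne]
      intro m _ hm
      rcases Nat.eq_zero_or_pos m with h | h
      · subst h; simp [wg] at hm
      · exact h
    rw [h2, ← hE.tsum_eq]
    have h3 : ∑ m ∈ (range n).filter (0 < ·), wg χ η N m =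
        ∑ m ∈ ((range n).filter (0 < ·)).subtype (· ∈ n.smoothNumbers), wg χ η N m := by
      rw [sum_subtype_of_mem]
      intro m hm
      rw [mem_filter, mem_range] at hm
      exact Nat.mem_smoothNumbers_of_lt hm.2 hm.1
    rw [h3]
    exact hE.summable.sum_le_tsum _ fun m _ => wg_nonneg χ η N m
  refine hle.trans ?_
  refine (prod_le_prod (fun p _ => tsum_nonneg fun e => wg_nonneg χ η N _) fun p hp =>
    wg_loc_le χ hχval η N (Nat.prime_of_mem_primesBelow hp)).trans ?_
  rw [← Real.exp_sum, sum_add_distrib, ← mul_sum]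
  have h4 : ∑ p ∈ n.primesBelow, (if p ∣ N then 2 * η * (p : ℝ) ^ (dN N - 1) else 0) ≤
      2 * η * (Real.log (LN N) + B) := by
    rw [← sum_filter, ← mul_sum]
    refine mul_le_mul_of_nonneg_left (le_trans ?_ (hBN N)) (by positivity)
    refine sum_le_sum_of_subset_of_nonneg ?_ fun p _ _ => by positivity
    intro p hp
    rw [mem_filter] at hp
    exact Nat.mem_primeFactors.2 ⟨Nat.prime_of_mem_primesBelow hp.1, hp.2, by omega⟩
  have h5 : K * ∑ p ∈ n.primesBelow, (p : ℝ) ^ (-3/2 : ℝ) ≤ K * S :=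
    mul_le_mul_of_nonneg_left (hsP.sum_le_tsum _ fun p _ => by positivity) hK
  have hL := one_le_LN N
  have h6 : Real.exp (2 * η * B + K * S) * LN N ^ (2 * η) =
      Real.exp (2 * η * (Real.log (LN N) + B) + K * S) := by
    have : LN N ^ (2 * η) = Real.exp (((2 * η : ℕ) : ℝ) * Real.log (LN N)) := by
      rw [Real.exp_nat_mul, Real.exp_log (by linarith)]
    rw [this, ← Real.exp_add]
    congr 1; push_cast; ring
  rw [h6]
  exact Real.exp_le_exp.2 (by linarith)

/-- summability and the bound for the log-weighted sum of `g`. -/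
lemma glog_sum (hχval : ∀ n : ℕ, χ (n : ZMod q) ∈ ({-1, 0, 1} : Set ℝ)) (η : ℕ) : ∃ B : ℝ, 0 < B ∧ ∀ N : ℕ, 1 ≤ N →
    Summable (fun m : ℕ => |gA χ η N m| * (1 + Real.log m) / m) ∧
    ∑' m : ℕ, |gA χ η N m| * (1 + Real.log m) / m ≤ B * LN N ^ (2 * η + 1) := by
  obtain ⟨B, hB, hBN⟩ := wg_sum χ hχval η
  refine ⟨5 * B, by positivity, fun N hN => ?_⟩
  have hL := one_le_LN N
  have hd := dN_pos N
  have hterm : ∀ m : ℕ, |gA χ η N m| * (1 + Real.log m) / m ≤ 5 * LN N * wg χ η N m := by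
    intro m
    rcases Nat.eq_zero_or_pos m with h | h
    · subst h; simp [wg]
    have hm : (1:ℝ) ≤ m := by exact_mod_cast h
    have hm0 : (0:ℝ) < m := by linarith
    rw [wg, Real.rpow_sub_one hm0.ne', mul_div_assoc]
    have h1 : 1 ≤ (m:ℝ) ^ dN N := Real.one_le_rpow hm hd.le
    have h2 : Real.log m ≤ (m:ℝ) ^ dN N * (4 * LN N) := by
      have := Real.log_le_rpow_div hm0.le hd
      have h3 : (m:ℝ) ^ dN N / dN N = (m:ℝ) ^ dN N * (4 * LN N) := by
        unfold dN; field_simp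
      rwa [h3] at this
    have h3 : 1 + Real.log m ≤ 5 * LN N * (m:ℝ) ^ dN N := by nlinarith
    have h4 : (1 + Real.log m) / m ≤ 5 * LN N * (m:ℝ) ^ dN N / m := by gcongr
    calc _ ≤ |gA χ η N m| * (5 * LN N * (m:ℝ) ^ dN N / m) :=
          mul_le_mul_of_nonneg_left h4 (abs_nonneg _)
      _ = _ := by ring
  have hnn : ∀ m : ℕ, 0 ≤ |gA χ η N m| * (1 + Real.log m) / m := by
    intro m
    have := Real.log_natCast_nonneg m
    positivity
  have hb : ∀ n, ∑ m ∈ range n, |gA χ η N m| * (1 + Real.log m) / m ≤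
      5 * B * LN N ^ (2 * η + 1) := by
    intro n
    refine (sum_le_sum fun m _ => hterm m).trans ?_
    rw [← mul_sum]
    have := mul_le_mul_of_nonneg_left (hBN N hN n) (by positivity : 0 ≤ 5 * LN N)
    refine this.trans_eq ?_
    ring
  exact ⟨summable_of_sum_range_le hnn hb, Real.tsum_le_of_sum_range_le hnn hb⟩

end MV


namespace MV

variable {q : ℕ} (χ : DirichletCharacter ℝ q)

/-- Euler factor. -/
noncomputable def fac (η N : ℕ) (p : ℕ) : ℝ :=
  (Qp (fp χ η N p) (χ (p : ZMod q)) η).eval (1 / (p:ℝ))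

lemma P1_eq_tprod_fac (η N : ℕ) :
    eulerProductP1 q χ η N = ∏' p : Nat.Primes, fac χ η N p := by
  unfold eulerProductP1 fac Qp fp
  congr 1
  ext p
  split_ifs with h
  · simp [div_eq_mul_inv]
  · simp; rw [mul_pow]; ring

lemma g_summable (hχval : ∀ n : ℕ, χ (n : ZMod q) ∈ ({-1, 0, 1} : Set ℝ)) (η N : ℕ) (hN : 1 ≤ N) : Summable (fun m : ℕ => |gA χ η N m| / m) := by
  obtain ⟨B, hB, h⟩ := glog_sum χ hχval η
  refine Summable.of_nonneg_of_le (fun m => by positivity) (fun m => ?_) (h N hN).1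
  have := Real.log_natCast_nonneg m
  gcongr
  nlinarith [abs_nonneg (gA χ η N m)]

lemma hasProd_fac (hχval : ∀ n : ℕ, χ (n : ZMod q) ∈ ({-1, 0, 1} : Set ℝ)) (η N : ℕ) (hN : 1 ≤ N) :
    HasProd (fun p : Nat.Primes => fac χ η N p) (∑' m : ℕ, gA χ η N m / m) := by
  have h1 : (fun m : ℕ => gA χ η N m / m) 1 = 1 := by simp [(gA_mult χ η N).map_one]
  have hmul : ∀ {m n : ℕ}, m.Coprime n → (fun m : ℕ => gA χ η N m / m) (m * n) =
      (fun m : ℕ => gA χ η N m / m) m * (fun m : ℕ => gA χ η N m / m) n := by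
    intro m n h
    simp only
    rw [(gA_mult χ η N).map_mul_of_coprime h, Nat.cast_mul, mul_div_mul_comm]
  have hs : Summable (‖(fun m : ℕ => gA χ η N m / m) ·‖) := by
    simpa [abs_div] using g_summable χ hχval η N hN
  have h := EulerProduct.eulerProduct_hasProd h1 hmul hs (by simp)
  have hfun : (fun p : Nat.Primes => fac χ η N p) = fun p : Nat.Primes =>
      ∑' e, (fun m : ℕ => gA χ η N m / m) ((p:ℕ) ^ e) := by
   funext p
   have h2 := (poly_hasSum (Qp (fp χ η N p) (χ ((p:ℕ) : ZMod q)) η) (1 / ((p:ℕ):ℝ))).tsum_eq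
   rw [fac, ← h2]
   congr 1; ext e
   rw [← gA_prime_pow χ η N p.2]
   push_cast; rw [one_div, inv_pow]; rfl
  rw [hfun]
  exact h

lemma P1_eq_tsum (hχval : ∀ n : ℕ, χ (n : ZMod q) ∈ ({-1, 0, 1} : Set ℝ)) (η N : ℕ) (hN : 1 ≤ N) :
    eulerProductP1 q χ η N = ∑' m : ℕ, gA χ η N m / m := by
  rw [P1_eq_tprod_fac, (hasProd_fac χ hχval η N hN).tprod_eq]

lemma P1_one_pos (hχval : ∀ n : ℕ, χ (n : ZMod q) ∈ ({-1, 0, 1} : Set ℝ)) (η : ℕ) : 0 < eulerProductP1 q χ η 1 := by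
  rw [P1_eq_tprod_fac]
  have hfp : ∀ p : Nat.Primes, fp χ η 1 p = η * (1 + χ ((p:ℕ) : ZMod q)) := by
    intro p
    rw [fp, if_neg]
    exact p.2.one_lt.ne' ∘ Nat.dvd_one.1
  have hpos : ∀ p : Nat.Primes, 0 < fac χ η 1 p := by
    intro p
    have ha := abs_le.1 (abs_chi_le χ hχval p)
    have hp2 : (2:ℝ) ≤ (p:ℕ) := by exact_mod_cast p.2.two_le
    have hp0 : (0:ℝ) < (p:ℕ) := by linarith
    rw [fac, hfp, Qp]
    simp only [Polynomial.eval_mul, Polynomial.eval_pow, Polynomial.eval_add, Polynomial.eval_sub,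
      Polynomial.eval_one, Polynomial.eval_X, Polynomial.eval_C]
    have hi : 1 / ((p:ℕ):ℝ) ≤ 1 / 2 := by gcongr
    have hi0 : 0 < 1 / ((p:ℕ):ℝ) := by positivity
    have ha1 : 0 ≤ 1 + χ ((p:ℕ) : ZMod q) := by linarith
    have h2 : 0 < 1 - 1 / ((p:ℕ):ℝ) := by linarith
    have h3 : 0 < 1 - χ ((p:ℕ) : ZMod q) * (1 / ((p:ℕ):ℝ)) := by nlinarith
    positivity
  have hsum : Summable (fun p : Nat.Primes => fac χ η 1 p - 1) := by
    have hs : Summable (fun p : Nat.Primes => (DP (2 * η) η).eval 1 * (1 / ((p:ℕ):ℝ)) ^ 2) := by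
      refine Summable.mul_left _ ?_
      have : Summable (fun n : ℕ => (1 / (n:ℝ)) ^ 2) := by
        have := Real.summable_one_div_nat_pow.2 (by norm_num : 1 < 2)
        simpa [div_pow] using this
      exact this.comp_injective Nat.Primes.coe_nat_injective
    refine Summable.of_norm_bounded hs fun p => ?_
    have hp1 : (1:ℝ) ≤ (p:ℕ) := by exact_mod_cast p.2.one_lt.le
    rw [Real.norm_eq_abs, fac, hfp]
    exact eval_sub_one (abs_chi_le χ hχval p) η (by positivity)
      ((div_le_one (by linarith)).2 hp1)
  have hlog := Real.summable_log_one_add_of_summable hsum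
  simp only [add_sub_cancel] at hlog
  rw [← Real.rexp_tsum_eq_tprod hpos hlog]
  exact Real.exp_pos _

lemma P1_lower (hχval : ∀ n : ℕ, χ (n : ZMod q) ∈ ({-1, 0, 1} : Set ℝ)) (η : ℕ) : ∃ c : ℝ, 0 < c ∧ ∀ N : ℕ, 1 ≤ N →
    c ≤ eulerProductP1 q χ η N * LN N ^ (2 * η) := by
  obtain ⟨B, hB, hBN⟩ := sum_primeFactors_le
  have hP := P1_one_pos χ hχval η
  refine ⟨eulerProductP1 q χ η 1 * Real.exp (-(2 * η * B)), by positivity, fun N hN => ?_⟩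
  have hL := one_le_LN N
  let w : Nat.Primes → ℝ := fun p => if (p:ℕ) ∣ N then 1 + η * (1 + χ ((p:ℕ) : ZMod q)) / ((p:ℕ):ℝ)
    else 1
  have hw : HasProd w (∏ p ∈ N.primeFactors.subtype Nat.Prime, w p) := by
    refine hasProd_prod_of_ne_finset_one fun p hp => ?_
    simp only [w]
    rw [if_neg]
    intro h
    exact hp (mem_subtype.2 (Nat.mem_primeFactors.2 ⟨p.2, h, by omega⟩))
  have hN1 := hasProd_fac χ hχval η N hN
  have h11 := hasProd_fac χ hχval η 1 le_rfl
  rw [← P1_eq_tsum χ hχval η N hN] at hN1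
  rw [← P1_eq_tsum χ hχval η 1 le_rfl] at h11
  have hmul := hN1.mul hw
  have heq : (fun p : Nat.Primes => fac χ η N p * w p) = fun p : Nat.Primes => fac χ η 1 p := by
    ext p
    have hp1 : ¬ (p:ℕ) ∣ 1 := p.2.one_lt.ne' ∘ Nat.dvd_one.1
    simp only [fac, fp, w, Qp, hp1, if_false]
    split_ifs with h
    · simp; ring
    · simp
  rw [heq] at hmul
  have h := hmul.unique h11
  have hwle : ∏ p ∈ N.primeFactors.subtype Nat.Prime, w p ≤ Real.exp (2 * η * B) * LN N ^ (2 * η) := by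
    have h1 : ∏ p ∈ N.primeFactors.subtype Nat.Prime, w p ≤
        ∏ p ∈ N.primeFactors.subtype Nat.Prime, Real.exp (2 * η * ((p:ℕ):ℝ) ^ (dN N - 1)) := by
      refine prod_le_prod (fun p _ => ?_) fun p _ => ?_
      all_goals
        have ha := abs_le.1 (abs_chi_le χ hχval p)
        have hp1 : (1:ℝ) ≤ (p:ℕ) := by exact_mod_cast p.2.one_lt.le
        have ha1 : 0 ≤ 1 + χ ((p:ℕ) : ZMod q) := by linarith
        simp only [w]
      · split_ifs <;> positivity
      · have hp0 : (0:ℝ) < (p:ℕ) := by linarith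
        have hr : 1 / ((p:ℕ):ℝ) ≤ ((p:ℕ):ℝ) ^ (dN N - 1) := by
          rw [one_div, ← Real.rpow_neg_one]
          exact Real.rpow_le_rpow_of_exponent_le hp1 (by linarith [dN_pos N])
        have he := Real.add_one_le_exp (2 * η * ((p:ℕ):ℝ) ^ (dN N - 1))
        have hq : η * (1 + χ ((p:ℕ) : ZMod q)) / ((p:ℕ):ℝ) ≤ 2 * η * ((p:ℕ):ℝ) ^ (dN N - 1) := by
          calc _ = (η * (1 + χ ((p:ℕ) : ZMod q))) * (1 / ((p:ℕ):ℝ)) := by ring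
            _ ≤ (η * 2) * ((p:ℕ):ℝ) ^ (dN N - 1) := by
              gcongr
              linarith
            _ = _ := by ring
        have h0 : 0 ≤ 2 * (η:ℝ) * ((p:ℕ):ℝ) ^ (dN N - 1) := by positivity
        split_ifs <;> linarith
    refine h1.trans ?_
    rw [← Real.exp_sum, ← mul_sum]
    have h2 : ∑ p ∈ N.primeFactors.subtype Nat.Prime, ((p:ℕ):ℝ) ^ (dN N - 1) =
        ∑ p ∈ N.primeFactors, (p:ℝ) ^ (dN N - 1) :=
      sum_subtype_of_mem (fun p : ℕ => (p:ℝ) ^ (dN N - 1)) fun p hp => Nat.prime_of_mem_primeFactors hp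
    rw [h2]
    have : LN N ^ (2 * η) = Real.exp (((2 * η : ℕ) : ℝ) * Real.log (LN N)) := by
      rw [Real.exp_nat_mul, Real.exp_log (by linarith)]
    rw [this, ← Real.exp_add]
    refine Real.exp_le_exp.2 ?_
    have := mul_le_mul_of_nonneg_left (hBN N) (by positivity : (0:ℝ) ≤ 2 * η)
    push_cast
    linarith
  have hw0 : 0 < ∏ p ∈ N.primeFactors.subtype Nat.Prime, w p := by
    refine prod_pos fun p _ => ?_
    have ha := abs_le.1 (abs_chi_le χ hχval p)
    have hp1 : (1:ℝ) ≤ (p:ℕ) := by exact_mod_cast p.2.one_lt.le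
    have ha1 : 0 ≤ 1 + χ ((p:ℕ) : ZMod q) := by linarith
    simp only [w]
    split_ifs <;> positivity
  have hPN : 0 < eulerProductP1 q χ η N := by
    rw [← h] at hP
    exact pos_of_mul_pos_left hP hw0.le
  calc eulerProductP1 q χ η 1 * Real.exp (-(2 * η * B))
      = eulerProductP1 q χ η N * (∏ p ∈ N.primeFactors.subtype Nat.Prime, w p) *
        Real.exp (-(2 * η * B)) := by rw [h]
    _ ≤ eulerProductP1 q χ η N * (Real.exp (2 * η * B) * LN N ^ (2 * η)) *
        Real.exp (-(2 * η * B)) := by gcongr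
    _ = eulerProductP1 q χ η N * LN N ^ (2 * η) *
        (Real.exp (2 * η * B) * Real.exp (-(2 * η * B))) := by ring
    _ = _ := by rw [← Real.exp_add, add_neg_cancel, Real.exp_zero, mul_one]

end MV


namespace MV

/-- comparison of `H(X/m)` with its expected size, in terms of `U = log X`, `v = log m`. -/
lemma pow_diff (k : ℕ) {U v : ℝ} (hv : 0 ≤ v) (hvU : v ≤ U) (hU : 1 ≤ U) :
    |(U - v) ^ k - U ^ k| ≤ k * v * U ^ k / √U := by
  have hsq : √U ≤ U := by
    rw [Real.sqrt_le_left (by linarith)]; nlinarith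
  have hs0 : 0 < √U := Real.sqrt_pos.2 (by linarith)
  have h1 : |(U - v) ^ k - U ^ k| ≤ k * v * U ^ (k - 1) := by
    induction k with
    | zero => simp
    | succ k ih =>
      have e : (U - v) ^ (k+1) - U ^ (k+1) = ((U - v) ^ k - U ^ k) * (U - v) - v * U ^ k := by ring
      rw [e]
      refine (abs_sub _ _).trans ?_
      rw [abs_mul, abs_of_nonneg (sub_nonneg.2 hvU), abs_of_nonneg (by positivity : 0 ≤ v * U ^ k)]
      have h2 : |(U - v) ^ k - U ^ k| * (U - v) ≤ k * v * U ^ (k - 1) * U := by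
        refine mul_le_mul ih (by linarith) (by linarith) (by positivity)
      have h3 : k * v * U ^ (k - 1) * U = k * v * U ^ k := by
        rcases k with _ | k
        · simp
        · simp [pow_succ]; ring
      push_cast
      linarith
  refine h1.trans ?_
  rw [le_div_iff₀ hs0]
  rcases k with _ | k
  · simp
  · simp only [Nat.add_sub_cancel]
    rw [pow_succ, ← mul_assoc]
    exact mul_le_mul_of_nonneg_left hsq (by positivity)

variable {q : ℕ} (χ : DirichletCharacter ℝ q)

lemma H_cmp (hχval : ∀ n : ℕ, χ (n : ZMod q) ∈ ({-1, 0, 1} : Set ℝ)) (hq : 3 ≤ q) (hχ : χ ≠ 1) (L1 : ℝ)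
    (hL1 : Filter.Tendsto (fun M : ℕ => ∑ n ∈ Finset.Icc 1 M, χ (n : ZMod q) / (n : ℝ))
      Filter.atTop (nhds L1)) (k : ℕ) :
    ∃ B : ℝ, 0 < B ∧ ∀ X : ℝ, Real.exp 1 ≤ X → ∀ m : ℕ, 1 ≤ m →
      |sm (rA χ ^ (k+1)) (X / m) - (L1 ^ (k+1) / (k.factorial : ℝ)) * (X / m) * Real.log X ^ k| ≤
        B * (X / m) * Real.log X ^ k * (1 + Real.log m) / √(Real.log X) := by
  obtain ⟨B, hB, h⟩ := sm_pow_asymp χ hq hχ hχval L1 hL1 k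
  have hLpos := L1_pos χ hq hχ hχval L1 hL1
  set c := L1 ^ (k+1) / (k.factorial : ℝ) with hc
  have hc0 : 0 < c := by positivity
  refine ⟨B * 2 ^ k + c * (k + 1), by positivity, fun X hX m hm => ?_⟩
  have hX0 : 0 < X := (Real.exp_pos 1).trans_le hX
  have hU : 1 ≤ Real.log X := (Real.le_log_iff_exp_le hX0).2 hX
  have hm1 : (1:ℝ) ≤ m := by exact_mod_cast hm
  have hm0 : (0:ℝ) < m := by linarith
  have hv := Real.log_nonneg hm1
  set U := Real.log X with hUd
  set v := Real.log m with hvd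
  have hs0 : 0 < √U := Real.sqrt_pos.2 (by linarith)
  have hXm : 0 < X / m := by positivity
  rcases le_or_gt (m:ℝ) X with hmX | hmX
  · have hvU : v ≤ U := Real.log_le_log hm0 hmX
    have hy : 1 ≤ X / m := (one_le_div hm0).2 hmX
    have hlog : Real.log (X / m) = U - v := Real.log_div hX0.ne' hm0.ne'
    have h1 := h (X / m) hy
    rw [hlog] at h1
    have h2 := pow_diff k hv hvU hU
    have h3 : c * (X / m) * (U - v) ^ k - c * (X / m) * U ^ k =
      c * (X / m) * ((U - v) ^ k - U ^ k) := by ring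
    have h4 : |c * (X / m) * (U - v) ^ k - c * (X / m) * U ^ k| ≤
        c * (X / m) * (k * v * U ^ k / √U) := by
      rw [h3, abs_mul, abs_of_nonneg (by positivity)]
      gcongr
    have hw : 1 ≤ 1 + (U - v) := by linarith
    have h5 : (1 + (U - v)) ^ k / √(1 + (U - v)) ≤ 2 ^ k * U ^ k * (1 + v) / √U := by
      have hsw : 0 < √(1 + (U - v)) := Real.sqrt_pos.2 (by linarith)
      have h6 : √U ≤ (1 + v) * √(1 + (U - v)) := by
        have e : (1 + v) = √((1 + v)^2) := (Real.sqrt_sq (by linarith)).symm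
        rw [e, ← Real.sqrt_mul (by positivity)]
        apply Real.sqrt_le_sqrt
        nlinarith [mul_nonneg hv (sub_nonneg.2 hvU), mul_nonneg hv hv]
      rw [div_le_div_iff₀ hsw hs0, ← mul_pow, mul_assoc]
      refine mul_le_mul (pow_le_pow_left₀ (by linarith) (by linarith) _) h6 hs0.le (by positivity)
    have h7 : B * (X / m) * (1 + (U - v)) ^ k / √(1 + (U - v)) ≤
        B * (X / m) * (2 ^ k * U ^ k * (1 + v) / √U) := by
      rw [mul_div_assoc]
      gcongr
    have h8 := abs_sub_le (sm (rA χ ^ (k+1)) (X / m)) (c * (X / m) * (U - v) ^ k)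
      (c * (X / m) * U ^ k)
    have h9 : c * (X / m) * (k * v * U ^ k / √U) ≤ c * (X / m) * ((k + 1) * (1 + v) * U ^ k / √U) := by
      gcongr <;> linarith
    calc _ ≤ B * (X / m) * (2 ^ k * U ^ k * (1 + v) / √U) +
          c * (X / m) * ((k + 1) * (1 + v) * U ^ k / √U) := by linarith
      _ = _ := by ring
  · have hfl : ⌊X / m⌋₊ = 0 := Nat.floor_eq_zero.2 ((div_lt_one hm0).2 hmX)
    have h0 : sm (rA χ ^ (k+1)) (X / m) = 0 := by simp [sm, hfl]
    rw [h0, zero_sub, abs_neg, abs_of_nonneg (by positivity)]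
    have hUv : U ≤ v := Real.log_le_log hX0 hmX.le
    have hsq : √U ≤ U := by
      rw [Real.sqrt_le_left (by linarith)]; nlinarith
    rw [le_div_iff₀ hs0]
    have h1 : c * (X / m) * U ^ k * √U ≤ c * (X / m) * U ^ k * (1 + v) := by
      gcongr; linarith
    refine h1.trans ?_
    have h2 : c ≤ B * 2 ^ k + c * (k + 1) := by
      have : 0 ≤ B * 2 ^ k + c * k := by positivity
      linarith
    gcongr

end MV

theorem mean_value_of_multiplicative_function (η : ℕ) (hη : 1 ≤ η)
    (q : ℕ) (hq : 3 ≤ q) (χ : DirichletCharacter ℝ q) (hχ : χ ≠ 1)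
    (hχval : ∀ n : ℕ, χ (n : ZMod q) ∈ ({-1, 0, 1} : Set ℝ))
    (L1 : ℝ)
    (hL1 : Filter.Tendsto (fun M : ℕ => ∑ n ∈ Finset.Icc 1 M, χ (n : ZMod q) / (n : ℝ))
      Filter.atTop (nhds L1)) :
    ∃ C C' : ℝ, 0 < C ∧ 0 < C' ∧ ∀ N : ℕ, 1 ≤ N → ∀ X : ℝ,
      Real.exp (C * Real.log ((N.primeFactors.card : ℝ) + 3) ^
          (2 * Real.exp 1 * (η : ℝ) + 2)) ≤ X →
      |(∑ n ∈ (Finset.Icc 1 ⌊X⌋₊).filter (fun n => Nat.gcd n N = 1),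
            ((ArithmeticFunction.moebius n : ℝ)) ^ 2 * (η : ℝ) ^ n.primeFactors.card *
              ∑ d ∈ n.divisors, χ ((d : ZMod q))) -
          eulerProductP1 q χ η N * L1 ^ η / Real.Gamma (η : ℝ) * X *
            Real.log X ^ (η - 1)| ≤
        C' * (eulerProductP1 q χ η N * L1 ^ η / Real.Gamma (η : ℝ) * X *
            Real.log X ^ (η - 1)) *
          Real.log ((N.primeFactors.card : ℝ) + 3) ^ (2 * Real.exp 1 * (η : ℝ) + 2) /
            Real.sqrt (Real.log X) := by
  obtain ⟨k, rfl⟩ : ∃ k, η = k + 1 := ⟨η - 1, by omega⟩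
  obtain ⟨B, hB, hcmp⟩ := MV.H_cmp χ hχval hq hχ L1 hL1 k
  obtain ⟨G, hG, hgs⟩ := MV.glog_sum χ hχval (k+1)
  obtain ⟨c0, hc0, hP⟩ := MV.P1_lower χ hχval (k+1)
  have hLpos := MV.L1_pos χ hq hχ hχval L1 hL1
  have hGam : Real.Gamma ((k + 1 : ℕ) : ℝ) = k.factorial := by
    push_cast; exact Real.Gamma_nat_eq_factorial k
  set c := L1 ^ (k+1) / (k.factorial : ℝ) with hc
  have hcpos : 0 < c := by positivity
  refine ⟨1, B * G / (c0 * c), one_pos, by positivity, fun N hN X hX => ?_⟩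
  have hL : 1 ≤ MV.LN N := MV.one_le_LN N
  change Real.exp (1 * MV.LN N ^ (2 * Real.exp 1 * ((k+1 : ℕ) : ℝ) + 2)) ≤ X at hX
  change _ ≤ _ * MV.LN N ^ (2 * Real.exp 1 * ((k+1 : ℕ) : ℝ) + 2) / _
  have hexp : (4 * (k + 1) + 1 : ℝ) ≤ 2 * Real.exp 1 * ((k+1 : ℕ) : ℝ) + 2 := by
    have := Real.add_one_le_exp (1:ℝ)
    have hk : (0:ℝ) ≤ k := Nat.cast_nonneg k
    push_cast; nlinarith
  have hpw : MV.LN N ^ (4 * (k + 1) + 1) ≤ MV.LN N ^ (2 * Real.exp 1 * ((k+1 : ℕ) : ℝ) + 2) := by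
    rw [← Real.rpow_natCast]
    refine Real.rpow_le_rpow_of_exponent_le hL ?_
    push_cast; exact_mod_cast hexp
  set W := MV.LN N ^ (2 * Real.exp 1 * ((k+1 : ℕ) : ℝ) + 2) with hW
  have hW1 : 1 ≤ W := le_trans (one_le_pow₀ hL) hpw
  have hXe : Real.exp 1 ≤ X := le_trans (Real.exp_le_exp.2 (by linarith)) hX
  have hX0 : 0 < X := (Real.exp_pos 1).trans_le hXe
  have hU : 1 ≤ Real.log X := (Real.le_log_iff_exp_le hX0).2 hXe
  have hs0 : 0 < √(Real.log X) := Real.sqrt_pos.2 (by linarith)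
  -- the sum as a summatory function
  have hS : (∑ n ∈ (Finset.Icc 1 ⌊X⌋₊).filter (fun n => Nat.gcd n N = 1),
      ((ArithmeticFunction.moebius n : ℝ)) ^ 2 * ((k+1 : ℕ) : ℝ) ^ n.primeFactors.card *
        ∑ d ∈ n.divisors, χ ((d : ZMod q))) =
      ∑' m : ℕ, MV.gA χ (k+1) N m * MV.sm (MV.rA χ ^ (k+1)) (X / m) := by
    have h1 : MV.sm (MV.fA χ (k+1) N) X = ∑ m ∈ Ioc 0 ⌊X⌋₊,
        MV.gA χ (k+1) N m * MV.sm (MV.rA χ ^ (k+1)) (X / m) := by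
      rw [← MV.gA_mul χ (k+1) N, MV.sm_mul]
    rw [tsum_eq_sum (s := Ioc 0 ⌊X⌋₊), ← h1, MV.sm, sum_filter]
    · refine sum_congr rfl fun n _ => ?_
      rw [MV.fA_apply, MV.rA_apply]
    · intro m hm
      rcases Nat.eq_zero_or_pos m with h | h
      · subst h; simp
      · have hm' : ⌊X⌋₊ < m := by
          by_contra hcon
          exact hm (mem_Ioc.2 ⟨h, by omega⟩)
        have hmX : X < m := (Nat.floor_lt hX0.le).1 hm'
        have hm0 : (0:ℝ) < m := by exact_mod_cast h
        have hfl : ⌊X / m⌋₊ = 0 := Nat.floor_eq_zero.2 ((div_lt_one hm0).2 hmX)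
        simp [MV.sm, hfl]
  have hPt := MV.P1_eq_tsum χ hχval (k+1) N hN
  have hsg : Summable (fun m : ℕ => MV.gA χ (k+1) N m / m) := by
    have := MV.g_summable χ hχval (k+1) N hN
    refine Summable.of_norm ?_
    simpa [abs_div] using this
  set U := Real.log X with hUd
  obtain ⟨hgl, hglb⟩ := hgs N hN
  have hterm : ∀ m : ℕ, ‖MV.gA χ (k+1) N m * MV.sm (MV.rA χ ^ (k+1)) (X / m) -
      MV.gA χ (k+1) N m / m * (c * X * U ^ k)‖ ≤
      (B * X * U ^ k / √U) * (|MV.gA χ (k+1) N m| * (1 + Real.log m) / m) := by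
    intro m
    rcases Nat.eq_zero_or_pos m with h | h
    · subst h; simp
    have h1 := hcmp X hXe m h
    have e : MV.gA χ (k+1) N m * MV.sm (MV.rA χ ^ (k+1)) (X / m) -
      MV.gA χ (k+1) N m / m * (c * X * U ^ k) = MV.gA χ (k+1) N m *
        (MV.sm (MV.rA χ ^ (k+1)) (X / m) - c * (X / m) * U ^ k) := by ring
    rw [e, Real.norm_eq_abs, abs_mul]
    refine (mul_le_mul_of_nonneg_left h1 (abs_nonneg _)).trans_eq ?_
    ring
  have hbs := hgl.mul_left (B * X * U ^ k / √U)
  have hds := Summable.of_norm_bounded hbs hterm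
  have hms := hsg.mul_right (c * X * U ^ k)
  have hfs : Summable (fun m : ℕ => MV.gA χ (k+1) N m * MV.sm (MV.rA χ ^ (k+1)) (X / m)) := by
    have := hds.add hms
    simpa using this
  have hdiff : |(∑' m : ℕ, MV.gA χ (k+1) N m * MV.sm (MV.rA χ ^ (k+1)) (X / m)) -
      eulerProductP1 q χ (k+1) N * (c * X * U ^ k)| ≤
      (B * X * U ^ k / √U) * (G * MV.LN N ^ (2 * (k+1) + 1)) := by
    rw [hPt, ← tsum_mul_right, ← hfs.tsum_sub hms, ← Real.norm_eq_abs]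
    refine (tsum_of_norm_bounded hbs.hasSum hterm).trans ?_
    rw [tsum_mul_left]
    gcongr
  rw [hS, hGam, Nat.add_sub_cancel]
  have e1 : eulerProductP1 q χ (k+1) N * L1 ^ (k+1) / (k.factorial:ℝ) * X * U ^ k =
      eulerProductP1 q χ (k+1) N * (c * X * U ^ k) := by rw [hc]; ring
  rw [e1]
  refine hdiff.trans ?_
  have hPc := hP N hN
  have hLk : 0 < MV.LN N ^ (2 * (k+1)) := by positivity
  have hPpos : 0 < eulerProductP1 q χ (k+1) N := pos_of_mul_pos_left (hc0.trans_le hPc) hLk.le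
  have h10 : c0 * MV.LN N ^ (2 * (k+1) + 1) ≤ eulerProductP1 q χ (k+1) N * W := by
    calc c0 * MV.LN N ^ (2 * (k+1) + 1) ≤ (eulerProductP1 q χ (k+1) N * MV.LN N ^ (2 * (k+1))) *
          MV.LN N ^ (2 * (k+1) + 1) := by gcongr
      _ = eulerProductP1 q χ (k+1) N * MV.LN N ^ (4 * (k + 1) + 1) := by
          rw [mul_assoc, ← pow_add]; congr 2; ring
      _ ≤ _ := by gcongr
  calc (B * X * U ^ k / √U) * (G * MV.LN N ^ (2 * (k+1) + 1))
      = (B * G * X * U ^ k / √U / c0) * (c0 * MV.LN N ^ (2 * (k+1) + 1)) := by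
        field_simp
    _ ≤ (B * G * X * U ^ k / √U / c0) * (eulerProductP1 q χ (k+1) N * W) := by
        gcongr
    _ = _ := by field_simp
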